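/- Let n ≥ 1 and k ≥ 2 be integers and let V : ℝⁿ → ℝ be smooth and satisfy Assumption (i)–(iii). Then for every τ > 0 there exists a constant C_τ > 0 such that for every u ∈ C_c^∞(ℝⁿ; ℝ) one has ∫_{ℝⁿ} f̃_τ(x)² |u(x)|² dx ≤ C_τ·Q_{τV}(u) + C_τ·‖u‖²_{L²}. -/

import Mathlib

open MeasureTheory Filter Topology Metric

noncomputable section

/-- Euclidean space ℝⁿ. -/
abbrev En (n : ℕ) := EuclideanSpace ℝ (Fin n)

/-- First-order partial derivative in direction `i`, as an endomorphism of functions. -/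
noncomputable def pd1 (n : ℕ) (i : Fin n) : Function.End (En n → ℝ) :=
  fun f x => fderiv ℝ f x (EuclideanSpace.single i 1)

/-- Order `|α|` of a multi-index. -/
def mdeg {n : ℕ} (α : Fin n → ℕ) : ℕ := ∑ i, α i

/-- Iterated partial derivative `∂^α`. -/
noncomputable def pdm (n : ℕ) (α : Fin n → ℕ) (f : En n → ℝ) : En n → ℝ :=
  ((List.ofFn fun i : Fin n => (pd1 n i) ^ (α i)).prod) f

/-- The finite set of multi-indices `lo ≤ |α| ≤ k`. -/
def midx (n k lo : ℕ) : Finset (Fin n → ℕ) :=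
  (Finset.Iic fun _ => k).filter fun α => lo ≤ mdeg α ∧ mdeg α ≤ k

/-- `f̃(x) = Σ_{1≤|α|≤k} |∂^α V(x)|^{1/|α|}`. -/
noncomputable def ftil (n k : ℕ) (V : En n → ℝ) (x : En n) : ℝ :=
  ∑ α ∈ midx n k 1, |pdm n α V x| ^ ((1 : ℝ) / (mdeg α))

/-- `f̃_τ(x) = Σ_{1≤|α|≤k} τ^{1/|α|} |∂^α V(x)|^{1/|α|}`. -/
noncomputable def ftilTau (n k : ℕ) (V : En n → ℝ) (τ : ℝ) (x : En n) : ℝ :=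
  ∑ α ∈ midx n k 1, τ ^ ((1 : ℝ) / (mdeg α)) * |pdm n α V x| ^ ((1 : ℝ) / (mdeg α))

/-- Regularized weight `f(x) = Σ_{1≤|α|≤k} (1 + |∂^α V(x)|²)^{1/(2|α|)}`. -/
noncomputable def freg (n k : ℕ) (V : En n → ℝ) (x : En n) : ℝ :=
  ∑ α ∈ midx n k 1, (1 + |pdm n α V x| ^ 2) ^ ((1 : ℝ) / (2 * mdeg α))

/-- The Hessian matrix `(∂_i ∂_j ρ)(x)`. -/
noncomputable def hessM (n : ℕ) (ρ : En n → ℝ) (x : En n) : Matrix (Fin n) (Fin n) ℝ :=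
  fun i j => pd1 n i (pd1 n j ρ) x

/-- Eigenvalues of the Hessian matrix (with value 0 in the degenerate non-symmetric case). -/
noncomputable def hessEig (n : ℕ) (ρ : En n → ℝ) (x : En n) : Fin n → ℝ :=
  if h : (hessM n ρ x).IsHermitian then h.eigenvalues else 0

/-- `Σ_{j ∈ I_{x,ρ}} λ_{ρ,j}(x)`, the sum of the positive eigenvalues of the Hessian. -/
noncomputable def lamPos (n : ℕ) (ρ : En n → ℝ) (x : En n) : ℝ :=
  ∑ j, max (hessEig n ρ x j) 0

/-- `M_ρ(x) = Σ_j max{−λ_{ρ,j}(x), 0}`. -/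
noncomputable def lamNeg (n : ℕ) (ρ : En n → ℝ) (x : En n) : ℝ :=
  ∑ j, max (-(hessEig n ρ x j)) 0

/-- Assumption (i)–(iii) of the paper. -/
def AssumptionA (n k : ℕ) (V : En n → ℝ) : Prop :=
  (∃ C₀ > (1 : ℝ), ∃ δ₁ ∈ Set.Ioo (0 : ℝ) 1, ∀ x : En n,
      lamPos n V x ≤ C₀ * (lamNeg n V x + ‖gradient V x‖ ^ 2
        + (∑ α ∈ midx n k 2, |pdm n α V x| ^ ((2 - δ₁) / (mdeg α))) + 1)) ∧
  (∃ δ₂ ∈ Set.Ioo (0 : ℝ) 1, ∀ α : Fin n → ℕ, mdeg α = k + 1 →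
      ∃ Cα > (0 : ℝ), ∀ x : En n,
        |pdm n α V x| ≤ Cα * (1 + ftil n k V x) ^ ((k : ℝ) + 1 - δ₂)) ∧
  (∀ M : ℝ, ∃ R : ℝ, ∀ x : En n, R ≤ ‖x‖ → M ≤ ftil n k V x)

/-- The Witten-Laplacian quadratic form `Q_{τV}(u) = ∫ |∇u + τ u ∇V|²`. -/
noncomputable def Qform (n : ℕ) (V : En n → ℝ) (τ : ℝ) (u : En n → ℝ) : ℝ :=
  ∫ x : En n, ‖gradient u x + (τ * u x) • gradient V x‖ ^ 2

/-- `u ∈ C_c^∞(ℝⁿ; ℝ)`. -/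
def TestFun (n : ℕ) (u : En n → ℝ) : Prop :=
  ContDiff ℝ (⊤ : ℕ∞) u ∧ HasCompactSupport u

/-- `p` is (given by) a real polynomial of total degree at most `r`. -/
def IsPolyDeg (n r : ℕ) (p : En n → ℝ) : Prop :=
  ∃ P : MvPolynomial (Fin n) ℝ, P.totalDegree ≤ r ∧
    ∀ x : En n, p x = MvPolynomial.eval (fun i => x i) P

/-- `q ∈ L_{p,0}` (limiting polynomials of `p` at `0` of degree at most `r`). -/
def memL (n r : ℕ) (p q : En n → ℝ) : Prop :=
  IsPolyDeg n r q ∧ q 0 = 0 ∧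
  ∃ y : ℕ → En n, ∃ τ h : ℕ → ℝ,
    Tendsto y atTop (nhds 0) ∧ (∀ j, 0 < τ j) ∧ (∀ j, 0 < h j) ∧
    Tendsto τ atTop atTop ∧ Tendsto h atTop (nhds 0) ∧
    ∀ α : Fin n → ℕ, 1 ≤ mdeg α → mdeg α ≤ r →
      Tendsto (fun j => τ j * h j ^ (mdeg α) * pdm n α p (y j)) atTop
        (nhds (pdm n α q 0))

/-! Lengths near `x` are measured by the reciprocal of the jet weight `Φ(x) = Σ ‖DᵐV(x)‖^{1/m}`,
which dominates `f̃_τ(x)` up to a constant. By (ii), where `Φ(x)` is large, `Φ` is comparable to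
`Φ(x)` on the balls of radius `R / Φ(x)`, with a constant polynomial in `R`, and `V` is there a
polynomial of degree `k` up to a small error; hence `V` oscillates by a fixed amount on the ball of
radius `1 / Φ(x)`.

This oscillation forces a descent. If `V` is larger than `V(x)` at a nearby `y₀` and never falls
below `V(x) - c`, then some translate of the bump `ε e^{-β|y - y₀|²}` touches the graph of `V` from
below away from `y₀`. At the contact point the radial second derivative of `V` is large compared
with the gradient and with the negative part of the Hessian, contrary to (i). So `V` falls by a
fixed `c` within distance `3 / Φ(x)`, and by `cJ` along a chain of `J` such steps, whose length
times `Φ(x)` is bounded by a power of `J`.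

Since `∇(e^{τV}u) = e^{τV}(∇u + τu∇V)`, integrating from near `x` to the end of the chain bounds the
mass of `u²` near `x` by `e^{-2τcJ}` times its mass on a larger ball plus `Φ(x)⁻²` times the
integral of `|∇u + τu∇V|²` there. Averaging these bounds against `Φ(x)^{n+2} dx` costs a power of
`J`, so that for large `J` the first term is absorbed; the region where `Φ` is bounded contributes
to `‖u‖²` only. -/

section JetWeight

variable {E F : Type*} [NormedAddCommGroup E] [NormedSpace ℝ E]
  [NormedAddCommGroup F] [NormedSpace ℝ F] {f : E → F} {k : ℕ}

/-- The weight `Φ(x) = Σ_{1 ≤ m ≤ k} ‖Dᵐf(x)‖^{1/m}`, a coordinate-free counterpart of `f̃`. Its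
reciprocal is the natural length scale of `f` at `x`. -/
def jetWeight (k : ℕ) (f : E → F) (x : E) : ℝ :=
  ∑ m ∈ Finset.Icc 1 k, ‖iteratedFDeriv ℝ m f x‖ ^ (m : ℝ)⁻¹

theorem jetWeight_nonneg (k : ℕ) (f : E → F) (x : E) : 0 ≤ jetWeight k f x :=
  Finset.sum_nonneg fun _ _ => Real.rpow_nonneg (norm_nonneg _) _

theorem norm_iteratedFDeriv_le_jetWeight_pow {m : ℕ} (hm : 1 ≤ m) (hmk : m ≤ k) (x : E) :
    ‖iteratedFDeriv ℝ m f x‖ ≤ jetWeight k f x ^ m := by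
  have hroot : ‖iteratedFDeriv ℝ m f x‖ ^ (m : ℝ)⁻¹ ≤ jetWeight k f x :=
    Finset.single_le_sum (f := fun m : ℕ => ‖iteratedFDeriv ℝ m f x‖ ^ (m : ℝ)⁻¹)
      (fun _ _ => Real.rpow_nonneg (norm_nonneg _) _) (Finset.mem_Icc.2 ⟨hm, hmk⟩)
  have hpow := pow_le_pow_left₀ (Real.rpow_nonneg (norm_nonneg _) _) hroot m
  rwa [Real.rpow_inv_natCast_pow (norm_nonneg _) (by omega)] at hpow

theorem jetWeight_le {x : E} {c : ℝ} (hc : 0 ≤ c)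
    (h : ∀ m, 1 ≤ m → m ≤ k → ‖iteratedFDeriv ℝ m f x‖ ≤ c ^ m) : jetWeight k f x ≤ k * c := by
  have hroot : ∀ m ∈ Finset.Icc 1 k, ‖iteratedFDeriv ℝ m f x‖ ^ (m : ℝ)⁻¹ ≤ c := by
    intro m hm
    obtain ⟨h1, h2⟩ := Finset.mem_Icc.1 hm
    exact (Real.rpow_le_rpow (norm_nonneg _) (h m h1 h2) (by positivity)).trans_eq
      (Real.pow_rpow_inv_natCast hc (by omega))
  calc jetWeight k f x ≤ ∑ _m ∈ Finset.Icc 1 k, c := Finset.sum_le_sum hroot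
    _ = k * c := by simp

theorem continuous_jetWeight (hf : ContDiff ℝ k f) : Continuous (jetWeight k f) := by
  refine continuous_finsetSum _ fun m hm => ?_
  have hmk : (m : WithTop ℕ∞) ≤ k := by exact_mod_cast (Finset.mem_Icc.1 hm).2
  exact (hf.continuous_iteratedFDeriv hmk).norm.rpow_const fun _ => Or.inr (by positivity)

theorem norm_iteratedFDeriv_sub_le {m : ℕ} (hf : ContDiff ℝ (m + 1) f) {s : Set E}
    (hs : Convex ℝ s) {B : ℝ} (hB : ∀ z ∈ s, ‖iteratedFDeriv ℝ (m + 1) f z‖ ≤ B)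
    {x y : E} (hx : x ∈ s) (hy : y ∈ s) :
    ‖iteratedFDeriv ℝ m f y - iteratedFDeriv ℝ m f x‖ ≤ B * ‖y - x‖ := by
  refine hs.norm_image_sub_le_of_norm_fderiv_le (𝕜 := ℝ) (fun z _ => ?_) (fun z hz => ?_) hx hy
  · exact hf.differentiable_iteratedFDeriv (by exact_mod_cast m.lt_succ_self) z
  · rw [norm_fderiv_iteratedFDeriv]
    exact hB z hz

theorem norm_iteratedFDeriv_le_taylor {x y : E} {r : ℝ} (hr : dist y x ≤ r) (i : ℕ) :
    ∀ {m : ℕ}, ContDiff ℝ (m + i) f → ∀ {B : ℝ},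
      (∀ z ∈ segment ℝ x y, ‖iteratedFDeriv ℝ (m + i) f z‖ ≤ B) →
      ∀ z ∈ segment ℝ x y, ‖iteratedFDeriv ℝ m f z‖ ≤
        ∑ j ∈ Finset.range i, ‖iteratedFDeriv ℝ (m + j) f x‖ * r ^ j + r ^ i * B := by
  induction i with
  | zero => intro m _ B h z hz; simpa using h z hz
  | succ i ih =>
    intro m hf B h z hz
    have hnext := ih (m := m + 1) (B := B)
      (hf.of_le (by exact_mod_cast (by omega : m + 1 + i ≤ m + (i + 1))))
      (fun z hz => by rw [Nat.add_right_comm]; exact h z hz)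
    set B' := ∑ j ∈ Finset.range i, ‖iteratedFDeriv ℝ (m + 1 + j) f x‖ * r ^ j + r ^ i * B with hB'
    have hx : x ∈ segment ℝ x y := left_mem_segment ℝ x y
    have hmv : ‖iteratedFDeriv ℝ m f z - iteratedFDeriv ℝ m f x‖ ≤ B' * r := by
      refine (norm_iteratedFDeriv_sub_le
        (hf.of_le (by exact_mod_cast (by omega : m + 1 ≤ m + (i + 1))))
        (convex_segment x y) hnext hx hz).trans ?_
      have hB0 : 0 ≤ B' := (norm_nonneg _).trans (hnext x hx)
      gcongr
      rw [← dist_eq_norm]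
      exact (((convex_closedBall x r).segment_subset (mem_closedBall_self (dist_nonneg.trans hr))
        hr) hz)
    calc ‖iteratedFDeriv ℝ m f z‖
        ≤ ‖iteratedFDeriv ℝ m f x‖ + ‖iteratedFDeriv ℝ m f z - iteratedFDeriv ℝ m f x‖ :=
          norm_le_insert' _ _
      _ ≤ ‖iteratedFDeriv ℝ m f x‖ + B' * r := by gcongr
      _ = _ := by
          have hshift : ∀ j ∈ Finset.range i, ‖iteratedFDeriv ℝ (m + 1 + j) f x‖ * r ^ j * r =
              ‖iteratedFDeriv ℝ (m + (j + 1)) f x‖ * r ^ (j + 1) := fun j _ => by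
            rw [Nat.add_assoc, Nat.add_comm 1, pow_succ, mul_assoc]
          rw [Finset.sum_range_succ', hB', add_mul, Finset.sum_mul, Finset.sum_congr rfl hshift,
            Nat.add_zero]
          ring

/- Taylor's formula from `x` to `y` has `k + 2 - m ≤ k + 1` terms. -/
theorem norm_iteratedFDeriv_le_mul {x y : E} {r b : ℝ} {m : ℕ} (hf : ContDiff ℝ (k + 1) f)
    (hr0 : 0 < r) (hr : dist y x ≤ r) (hm : 1 ≤ m) (hmk : m ≤ k)
    (hx : ∀ j, m + j ≤ k → ‖iteratedFDeriv ℝ (m + j) f x‖ * r ^ j ≤ b)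
    (htop : ∀ z ∈ segment ℝ x y, ‖iteratedFDeriv ℝ (k + 1) f z‖ * r ^ (k + 1 - m) ≤ b) :
    ‖iteratedFDeriv ℝ m f y‖ ≤ (k + 1) * b := by
  obtain ⟨i, hi⟩ : ∃ i, m + i = k + 1 := ⟨k + 1 - m, by omega⟩
  have hb : 0 ≤ b := (mul_nonneg (norm_nonneg _) (pow_nonneg hr0.le _)).trans (hx 0 hmk)
  have htaylor := norm_iteratedFDeriv_le_taylor hr i (f := f) (m := m) (B := b / r ^ i)
    (hf.of_le (by exact_mod_cast hi.le))
    (fun z hz => by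
      rw [le_div_iff₀ (by positivity), hi, show i = k + 1 - m by omega]
      exact htop z hz)
    y (right_mem_segment ℝ x y)
  calc ‖iteratedFDeriv ℝ m f y‖
      ≤ ∑ j ∈ Finset.range i, ‖iteratedFDeriv ℝ (m + j) f x‖ * r ^ j + r ^ i * (b / r ^ i) :=
        htaylor
    _ ≤ ∑ _j ∈ Finset.range i, b + b := by
        rw [mul_div_cancel₀ _ (by positivity)]
        gcongr with j hj
        exact hx j (by have := Finset.mem_range.1 hj; omega)
    _ = (i + 1) * b := by simp [add_mul]
    _ ≤ (k + 1) * b := by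
        gcongr
        omega

end JetWeight

section Tame

theorem eventually_mul_rpow_le {A p δ η : ℝ} (C : ℝ) (hA : 0 ≤ A) (hδ : 0 < δ) (hδp : δ ≤ p)
    (hη : 0 < η) : ∀ᶠ L in atTop, C * (1 + A * L) ^ (p - δ) ≤ η * L ^ p := by
  have hlarge := (tendsto_rpow_atTop hδ).eventually_ge_atTop (|C| * (1 + A) ^ (p - δ) / η)
  filter_upwards [hlarge, eventually_ge_atTop 1] with L hL hL1
  have hL0 : 0 < L := by linarith
  rw [div_le_iff₀ hη] at hL
  calc C * (1 + A * L) ^ (p - δ) ≤ |C| * ((1 + A) * L) ^ (p - δ) := by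
        gcongr
        · exact le_abs_self C
        · linarith
    _ = |C| * (1 + A) ^ (p - δ) * L ^ (p - δ) := by
        rw [Real.mul_rpow (by positivity) hL0.le, mul_assoc]
    _ ≤ L ^ δ * η * L ^ (p - δ) := by gcongr
    _ = η * L ^ p := by
        rw [mul_comm _ η, mul_assoc, ← Real.rpow_add hL0, add_sub_cancel]

theorem lt_on_Icc_of_bootstrap {φ : ℝ → ℝ} {M : ℝ} (hφ : ContinuousOn φ (Set.Icc 0 1))
    (h0 : φ 0 ≤ M) (hstep : ∀ t ∈ Set.Icc (0 : ℝ) 1, (∀ s ∈ Set.Icc 0 t, φ s ≤ M) → φ t < M) :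
    ∀ t ∈ Set.Icc (0 : ℝ) 1, φ t < M := by
  have hit : ∀ s ∈ Set.Icc (0 : ℝ) 1, M ≤ φ s → ∃ r ∈ Set.Icc 0 s, φ r = M := fun s hs hMs =>
    intermediate_value_Icc hs.1 (hφ.mono (Set.Icc_subset_Icc_right hs.2)) ⟨h0, hMs⟩
  by_contra! ⟨t, ht, hMt⟩
  have hclosed : IsClosed (Set.Icc 0 1 ∩ φ ⁻¹' {M}) :=
    hφ.preimage_isClosed_of_isClosed isClosed_Icc isClosed_singleton
  obtain ⟨r, hr, hMr⟩ := hit t ht hMt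
  obtain ⟨t₀, ⟨ht₀, hMt₀⟩, hleast⟩ := (isCompact_Icc.of_isClosed_subset hclosed
    Set.inter_subset_left).exists_isLeast ⟨r, ⟨hr.1, hr.2.trans ht.2⟩, hMr⟩
  refine (hstep t₀ ht₀ fun s hs => ?_).ne hMt₀
  by_contra! hMs
  obtain ⟨q, hq, hMq⟩ := hit s ⟨hs.1, hs.2.trans ht₀.2⟩ hMs.le
  have hqs : s ≤ q := hs.2.trans (hleast ⟨⟨hq.1, hq.2.trans (hs.2.trans ht₀.2)⟩, hMq⟩)
  rw [le_antisymm hqs hq.2, hMq] at hMs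
  exact hMs.false

variable {E F : Type*} [NormedAddCommGroup E] [NormedSpace ℝ E]
  [NormedAddCommGroup F] [NormedSpace ℝ F] {f : E → F} {k : ℕ}

/-- Assumption (ii) in terms of `jetWeight`: the derivatives of order `k + 1` are of strictly lower
order than `Φ ^ (k + 1)`, so that `f` is a polynomial of degree `k` up to a small error on the
scale `1 / Φ`. -/
def JetTame (k : ℕ) (f : E → F) : Prop :=
  ∃ C : ℝ, ∃ δ ∈ Set.Ioo (0 : ℝ) 1, ∀ x : E,
    ‖iteratedFDeriv ℝ (k + 1) f x‖ ≤ C * (1 + jetWeight k f x) ^ ((k : ℝ) + 1 - δ)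

theorem JetTame.eventually_norm_le (hf : JetTame k f) {A η : ℝ} (hA : 0 ≤ A) (hη : 0 < η) :
    ∀ᶠ L in atTop, ∀ y, jetWeight k f y ≤ A * L →
      ‖iteratedFDeriv ℝ (k + 1) f y‖ ≤ η * L ^ (k + 1) := by
  obtain ⟨C, δ, ⟨hδ0, hδ1⟩, hC⟩ := hf
  have hp : δ ≤ (k : ℝ) + 1 := by linarith [(Nat.cast_nonneg k : (0 : ℝ) ≤ k)]
  filter_upwards [eventually_mul_rpow_le |C| hA hδ0 hp hη] with L hL y hy
  have hy0 := jetWeight_nonneg k f y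
  calc ‖iteratedFDeriv ℝ (k + 1) f y‖ ≤ C * (1 + jetWeight k f y) ^ ((k : ℝ) + 1 - δ) := hC y
    _ ≤ |C| * (1 + A * L) ^ ((k : ℝ) + 1 - δ) := by
        gcongr
        exact le_abs_self C
    _ ≤ η * L ^ (k + 1) := by exact_mod_cast hL

theorem norm_iteratedFDeriv_le_of_top_le {x y : E} {R : ℝ} {m : ℕ} (hf : ContDiff ℝ (k + 1) f)
    (hx : 0 < jetWeight k f x) (hR : 1 ≤ R) (hy : dist y x ≤ R / jetWeight k f x)
    (htop : ∀ z ∈ segment ℝ x y, ‖iteratedFDeriv ℝ (k + 1) f z‖ ≤ jetWeight k f x ^ (k + 1))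
    (hm : 1 ≤ m) (hmk : m ≤ k) :
    ‖iteratedFDeriv ℝ m f y‖ ≤ (k + 1) * R ^ k * jetWeight k f x ^ m := by
  set L := jetWeight k f x
  have hscale : ∀ {j l : ℕ}, j ≤ k → m + j = l → L ^ l * (R / L) ^ j ≤ R ^ k * L ^ m := by
    rintro j l hjk rfl
    calc L ^ (m + j) * (R / L) ^ j = R ^ j * L ^ m := by
          rw [pow_add, div_pow]
          field_simp
      _ ≤ R ^ k * L ^ m := by gcongr
  rw [mul_assoc]
  refine norm_iteratedFDeriv_le_mul hf (by positivity) hy hm hmk (fun j hj => ?_) (fun z hz => ?_)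
  · refine le_trans ?_ (hscale (by omega : j ≤ k) rfl)
    gcongr
    exact norm_iteratedFDeriv_le_jetWeight_pow (by omega) hj x
  · refine le_trans ?_ (hscale (by omega : k + 1 - m ≤ k) (by omega : _ = k + 1))
    gcongr
    exact htop z hz

theorem jetWeight_lt_of_top_le {x y : E} {R : ℝ} (hf : ContDiff ℝ (k + 1) f)
    (hx : 0 < jetWeight k f x) (hR : 1 ≤ R) (hy : dist y x ≤ R / jetWeight k f x)
    (htop : ∀ z ∈ segment ℝ x y, ‖iteratedFDeriv ℝ (k + 1) f z‖ ≤ jetWeight k f x ^ (k + 1)) :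
    jetWeight k f y < (k + 1) ^ 2 * R ^ k * jetWeight k f x := by
  have hA : 1 ≤ (k + 1) * R ^ k := by
    have := one_le_pow₀ hR (n := k)
    nlinarith [(Nat.cast_nonneg k : (0 : ℝ) ≤ k)]
  calc jetWeight k f y ≤ k * ((k + 1) * R ^ k * jetWeight k f x) :=
        jetWeight_le (by positivity) fun m hm hmk =>
          (norm_iteratedFDeriv_le_of_top_le hf hx hR hy htop hm hmk).trans <| by
            rw [mul_pow]
            gcongr
            exact le_self_pow₀ hA (by omega)
    _ < (k + 1) * ((k + 1) * R ^ k * jetWeight k f x) := by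
        gcongr
        linarith
    _ = (k + 1) ^ 2 * R ^ k * jetWeight k f x := by ring

theorem JetTame.eventually_jetWeight_lt (ht : JetTame k f) (hf : ContDiff ℝ (k + 1) f)
    {R : ℝ} (hR : 1 ≤ R) :
    ∀ᶠ x in comap (jetWeight k f) atTop, ∀ y ∈ closedBall x (R / jetWeight k f x),
      jetWeight k f y < (k + 1) ^ 2 * R ^ k * jetWeight k f x := by
  have hK : 1 ≤ (k + 1 : ℝ) ^ 2 * R ^ k := one_le_mul_of_one_le_of_one_le
    (one_le_pow₀ (by linarith [(Nat.cast_nonneg k : (0 : ℝ) ≤ k)])) (one_le_pow₀ hR)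
  have htop := ht.eventually_norm_le (zero_le_one.trans hK) one_pos
  filter_upwards [preimage_mem_comap htop, preimage_mem_comap (Ioi_mem_atTop 0)] with x hx hx0 y hy
  have hx0 : 0 < jetWeight k f x := hx0
  have hboot := lt_on_Icc_of_bootstrap (φ := fun t => jetWeight k f (AffineMap.lineMap x y t))
    (M := (k + 1) ^ 2 * R ^ k * jetWeight k f x)
    (((continuous_jetWeight (hf.of_le (by exact_mod_cast k.le_succ))).comp
      AffineMap.lineMap_continuous).continuousOn)
    (by simpa using le_mul_of_one_le_left hx0.le hK) fun t htI hle => ?_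
  · simpa using hboot 1 (by simp)
  have hseg : segment ℝ x (AffineMap.lineMap x y t) ⊆ AffineMap.lineMap x y '' Set.Icc 0 t := by
    rw [segment_eq_image_lineMap]
    rintro _ ⟨s, hs, rfl⟩
    exact ⟨s * t, ⟨mul_nonneg hs.1 htI.1, mul_le_of_le_one_left htI.1 hs.2⟩, by
      simp [AffineMap.lineMap_apply, mul_smul]⟩
  refine jetWeight_lt_of_top_le hf hx0 hR ?_ fun z hz => ?_
  · rw [dist_lineMap_left, Real.norm_of_nonneg htI.1, dist_comm x y]
    exact (mul_le_of_le_one_left dist_nonneg htI.2).trans hy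
  · obtain ⟨s, hs, rfl⟩ := hseg hz
    simpa using hx _ (hle s hs)

theorem JetTame.eventually_norm_top_le (ht : JetTame k f) (hf : ContDiff ℝ (k + 1) f)
    {R η : ℝ} (hR : 1 ≤ R) (hη : 0 < η) :
    ∀ᶠ x in comap (jetWeight k f) atTop, ∀ y ∈ closedBall x (R / jetWeight k f x),
      ‖iteratedFDeriv ℝ (k + 1) f y‖ ≤ η * jetWeight k f x ^ (k + 1) := by
  have htop := ht.eventually_norm_le (A := (k + 1) ^ 2 * R ^ k) (by positivity) hη
  filter_upwards [ht.eventually_jetWeight_lt hf hR, preimage_mem_comap htop] with x hup hx y hy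
  exact hx y (hup y hy).le

theorem JetTame.eventually_norm_iteratedFDeriv_le (ht : JetTame k f) (hf : ContDiff ℝ (k + 1) f)
    {R : ℝ} (hR : 1 ≤ R) :
    ∀ᶠ x in comap (jetWeight k f) atTop, ∀ y ∈ closedBall x (R / jetWeight k f x),
      ∀ m, 1 ≤ m → m ≤ k + 1 →
        ‖iteratedFDeriv ℝ m f y‖ ≤ (k + 1) * R ^ k * jetWeight k f x ^ m := by
  filter_upwards [ht.eventually_norm_top_le hf hR one_pos, preimage_mem_comap (Ioi_mem_atTop 0)]
    with x htop hx0 y hy m hm hmk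
  have hx0 : 0 < jetWeight k f x := hx0
  simp only [one_mul] at htop
  rcases Nat.lt_or_eq_of_le hmk with hmk | rfl
  · refine norm_iteratedFDeriv_le_of_top_le hf hx0 hR hy (fun z hz => htop z ?_) hm (by omega)
    exact (convex_closedBall x _).segment_subset (mem_closedBall_self (by positivity)) hy hz
  · refine (htop y hy).trans (le_mul_of_one_le_left (by positivity) ?_)
    exact one_le_mul_of_one_le_of_one_le
      (by linarith [(Nat.cast_nonneg k : (0 : ℝ) ≤ k)]) (one_le_pow₀ hR)

theorem scaled_pow_le {a L S : ℝ} {l m j : ℕ} (ha : 1 ≤ a) (hL : 0 < L) (hS : 1 ≤ S) (hm : 1 ≤ m)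
    (hj : m + j ≤ l + 1) : (L / (a * S ^ l)) ^ (m + j) * (S ^ (l + 1) / L) ^ j ≤ (L / a) ^ m := by
  have hjl : j ≤ l * m := (by omega : j ≤ l).trans (Nat.le_mul_of_pos_right l hm)
  have hS' : S ^ j ≤ (S ^ l) ^ m * a ^ j := by
    rw [← pow_mul]
    exact (pow_le_pow_right₀ hS hjl).trans (le_mul_of_one_le_right (by positivity) (one_le_pow₀ ha))
  calc (L / (a * S ^ l)) ^ (m + j) * (S ^ (l + 1) / L) ^ j
      = (L / a) ^ m * (S ^ j / ((S ^ l) ^ m * a ^ j)) := by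
        rw [pow_add, pow_succ S l]
        simp only [div_pow, mul_pow]
        field_simp
    _ ≤ (L / a) ^ m :=
        mul_le_of_le_one_right (by positivity) (div_le_one_of_le₀ hS' (by positivity))

theorem scaled_top_le {a L P : ℝ} {k m i : ℕ} (ha : 1 ≤ a) (hL : 0 < L) (hP : 1 ≤ P)
    (hi : m + i = k + 1) :
    ((a * P) ^ (k + 1))⁻¹ * L ^ (k + 1) * (P / L) ^ i ≤ (L / a) ^ m := by
  calc ((a * P) ^ (k + 1))⁻¹ * L ^ (k + 1) * (P / L) ^ i
      = (L / a) ^ m * (1 / (a ^ i * P ^ m)) := by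
        rw [← hi, pow_add, pow_add]
        simp only [div_pow, mul_pow]
        field_simp
    _ ≤ (L / a) ^ m := mul_le_of_le_one_right (by positivity) <| div_le_one_of_le₀
        (one_le_mul_of_one_le_of_one_le (one_le_pow₀ ha) (one_le_pow₀ hP)) (by positivity)

theorem jetWeight_le_of_norm_top_le {x y : E} {S : ℝ} (hf : ContDiff ℝ (k + 1) f)
    (hx : 0 < jetWeight k f x) (hS : 1 ≤ S) (hy : dist y x ≤ S ^ k / jetWeight k f x)
    (htop : ∀ z ∈ segment ℝ y x, ‖iteratedFDeriv ℝ (k + 1) f z‖ ≤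
      (((k + 1) ^ 2 * S ^ k) ^ (k + 1))⁻¹ * jetWeight k f x ^ (k + 1)) :
    jetWeight k f x ≤ (k + 1) ^ 2 * S ^ (k - 1) * jetWeight k f y := by
  obtain ⟨l, rfl⟩ : ∃ l, k = l + 1 := Nat.exists_eq_succ_of_ne_zero <| by
    rintro rfl
    simp [jetWeight] at hx
  set k := l + 1
  set L := jetWeight k f x
  set a : ℝ := (k + 1) ^ 2 with ha
  by_contra! hlt
  have hsmall : jetWeight k f y ≤ L / (a * S ^ l) := by
    rw [le_div_iff₀ (by positivity), mul_comm]
    exact hlt.le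
  suffices h : ∀ m, 1 ≤ m → m ≤ k → ‖iteratedFDeriv ℝ m f x‖ ≤ (L / (k + 1)) ^ m by
    have : L ≤ k * (L / (k + 1)) := jetWeight_le (by positivity) h
    rw [mul_div_assoc', le_div_iff₀ (by positivity)] at this
    linarith
  intro m hm hmk
  have ha1 : 1 ≤ a := one_le_pow₀ (by linarith [(Nat.cast_nonneg k : (0 : ℝ) ≤ k)])
  have hscale := scaled_top_le ha1 hx (one_le_pow₀ hS (n := k)) (by omega : m + (k + 1 - m) = k + 1)
  calc ‖iteratedFDeriv ℝ m f x‖ ≤ (k + 1) * (L / a) ^ m := by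
        refine norm_iteratedFDeriv_le_mul hf (by positivity) (dist_comm x y ▸ hy) hm hmk
          (fun j hj => le_trans ?_ (scaled_pow_le ha1 hx hS hm hj))
          (fun z hz => le_trans ?_ hscale)
        · gcongr
          exact (norm_iteratedFDeriv_le_jetWeight_pow (by omega) hj y).trans
            (pow_le_pow_left₀ (jetWeight_nonneg k f y) hsmall _)
        · gcongr ?_ * _
          exact htop z hz
    _ ≤ (k + 1) ^ m * (L / a) ^ m := by
        gcongr
        exact le_self_pow₀ (by linarith [(Nat.cast_nonneg k : (0 : ℝ) ≤ k)]) (by omega)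
    _ = (L / (k + 1)) ^ m := by
        rw [← mul_pow, ha]
        field_simp

theorem JetTame.eventually_jetWeight_le (ht : JetTame k f) (hf : ContDiff ℝ (k + 1) f)
    {S : ℝ} (hS : 1 ≤ S) :
    ∀ᶠ x in comap (jetWeight k f) atTop, ∀ y ∈ closedBall x (S ^ k / jetWeight k f x),
      jetWeight k f x ≤ (k + 1) ^ 2 * S ^ (k - 1) * jetWeight k f y := by
  filter_upwards [ht.eventually_norm_top_le hf (one_le_pow₀ hS)
    (η := (((k + 1 : ℝ) ^ 2 * S ^ k) ^ (k + 1))⁻¹) (by positivity),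
    preimage_mem_comap (Ioi_mem_atTop 0)] with x htop hx0 y hy
  have hx0 : 0 < jetWeight k f x := hx0
  refine jetWeight_le_of_norm_top_le hf hx0 hS hy fun z hz => htop z ?_
  exact (convex_closedBall x _).segment_subset hy (mem_closedBall_self (by positivity)) hz

theorem JetTame.eventually_comparable (ht : JetTame k f) (hf : ContDiff ℝ (k + 1) f)
    {R : ℝ} (hR : 1 ≤ R) :
    ∀ᶠ x in comap (jetWeight k f) atTop, ∀ y ∈ closedBall x (R / jetWeight k f x),
      jetWeight k f y ≤ (k + 1) ^ 2 * R ^ k * jetWeight k f x ∧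
      jetWeight k f x ≤ (k + 1) ^ 2 * R ^ k * jetWeight k f y := by
  filter_upwards [ht.eventually_jetWeight_lt hf hR, ht.eventually_jetWeight_le hf hR,
    preimage_mem_comap (Ioi_mem_atTop 0)] with x hup hlow hx0 y hy
  have hx0 : 0 < jetWeight k f x := hx0
  have hy0 := jetWeight_nonneg k f y
  refine ⟨(hup y hy).le, ?_⟩
  rcases Nat.eq_zero_or_pos k with rfl | hk
  · simp [jetWeight] at hx0
  have hball : y ∈ closedBall x (R ^ k / jetWeight k f x) :=
    closedBall_subset_closedBall (by gcongr; exact le_self_pow₀ hR hk.ne') hy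
  exact (hlow y hball).trans (by gcongr; exact k.pred_le)

end Tame

section Oscillation

variable {E F : Type*} [NormedAddCommGroup E] [NormedSpace ℝ E]
  [NormedAddCommGroup F] [NormedSpace ℝ F] {f : E → F} {k : ℕ}

/- Landau's inequality. -/
theorem norm_fderiv_le_of_osc {e A h : ℝ} {y : E} (hf : Differentiable ℝ f) (hh : 0 < h)
    (hA : 0 ≤ A) (hosc : ∀ z ∈ closedBall y h, ‖f z - f y‖ ≤ e)
    (hlip : ∀ z ∈ closedBall y h, ‖fderiv ℝ f z - fderiv ℝ f y‖ ≤ A * ‖z - y‖) :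
    ‖fderiv ℝ f y‖ ≤ e / h + h * A := by
  have hy : y ∈ closedBall y h := mem_closedBall_self hh.le
  have he : 0 ≤ e := (norm_nonneg _).trans (hosc y hy)
  refine ContinuousLinearMap.opNorm_le_of_unit_norm (𝕜 := ℝ) (by positivity) fun v hv => ?_
  have hnorm : ‖h • v‖ = h := by rw [norm_smul, hv, mul_one, Real.norm_of_nonneg hh.le]
  have hmem : y + h • v ∈ closedBall y h := by simp [hnorm]
  have hrem : ‖f (y + h • v) - f y - fderiv ℝ f y (y + h • v - y)‖ ≤ A * h * ‖y + h • v - y‖ := by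
    refine (convex_closedBall y h).norm_image_sub_le_of_norm_fderiv_le' (𝕜 := ℝ)
      (fun z _ => hf z) (fun z hz => (hlip z hz).trans ?_) hy hmem
    gcongr
    rwa [← dist_eq_norm]
  rw [add_sub_cancel_left, hnorm] at hrem
  have hlin : ‖fderiv ℝ f y (h • v)‖ ≤ e + A * h * h :=
    (norm_le_norm_add_norm_sub' _ (f (y + h • v) - f y)).trans
      (add_le_add (hosc _ hmem) ((norm_sub_rev _ _).trans_le hrem))
  rw [map_smul, norm_smul, Real.norm_of_nonneg hh.le, ← le_div_iff₀' hh] at hlin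
  exact hlin.trans_eq (by field_simp)

theorem norm_fderiv_iteratedFDeriv_sub (f : E → F) (m : ℕ) (z y : E) :
    ‖fderiv ℝ (iteratedFDeriv ℝ m f) z - fderiv ℝ (iteratedFDeriv ℝ m f) y‖ =
      ‖iteratedFDeriv ℝ (m + 1) f z - iteratedFDeriv ℝ (m + 1) f y‖ := by
  simp only [fderiv_iteratedFDeriv, Function.comp_apply]
  rw [← LinearIsometryEquiv.map_sub, LinearIsometryEquiv.norm_map]

theorem norm_iteratedFDeriv_succ_le {m : ℕ} {s : Set E} {e A h : ℝ} {y : E}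
    (hf : ContDiff ℝ (m + 2) f) (hs : Convex ℝ s) (hh : 0 < h) (hys : closedBall y h ⊆ s)
    (he : ∀ z ∈ s, ‖iteratedFDeriv ℝ m f z‖ ≤ e)
    (hA : ∀ z ∈ s, ‖iteratedFDeriv ℝ (m + 2) f z‖ ≤ A) :
    ‖iteratedFDeriv ℝ (m + 1) f y‖ ≤ 2 * e / h + h * A := by
  have hy : y ∈ s := hys (mem_closedBall_self hh.le)
  rw [← norm_fderiv_iteratedFDeriv]
  refine norm_fderiv_le_of_osc
    (hf.differentiable_iteratedFDeriv (by exact_mod_cast (by omega : m < m + 2))) hh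
    ((norm_nonneg _).trans (hA y hy)) (fun z hz => ?_) (fun z hz => ?_)
  · rw [two_mul]
    exact (norm_sub_le _ _).trans (add_le_add (he z (hys hz)) (he y hy))
  · rw [norm_fderiv_iteratedFDeriv_sub]
    exact norm_iteratedFDeriv_sub_le (m := m + 1) (by exact_mod_cast hf) hs hA hy (hys hz)

/- Landau's inequality is applied to one derivative after another, halving the radius each time. -/
theorem eventually_norm_iteratedFDeriv_le_of_norm_le (k : ℕ) {A : ℝ} (hA : 0 < A) (m : ℕ)
    (hm : m ≤ k) : ∀ ε > 0, ∀ᶠ c in 𝓝[>] (0 : ℝ), ∀ (g : E → F) (x : E) (L : ℝ),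
      ContDiff ℝ (k + 1) g → 0 < L →
      (∀ j, 1 ≤ j → j ≤ k + 1 → ∀ y ∈ closedBall x (1 / L),
        ‖iteratedFDeriv ℝ j g y‖ ≤ A * L ^ j) →
      (∀ y ∈ closedBall x (1 / L), ‖g y‖ ≤ c) →
      ∀ y ∈ closedBall x ((1 / 2) ^ m / L), ‖iteratedFDeriv ℝ m g y‖ ≤ ε * L ^ m := by
  induction m with
  | zero =>
    intro ε hε
    filter_upwards [nhdsWithin_le_nhds (Iic_mem_nhds hε)] with c hc g x L _ _ _ hg y hy
    simpa using (hg y (by simpa using hy)).trans hc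
  | succ m ih =>
    intro ε hε
    set t : ℝ := min ((1 / 2) ^ (m + 1)) (ε / (2 * A))
    have ht0 : 0 < t := by positivity
    have htA : t * A ≤ ε / 2 := by
      calc t * A ≤ ε / (2 * A) * A := by gcongr; exact min_le_right _ _
        _ = ε / 2 := by field_simp
    filter_upwards [ih (by omega) (t * ε / 4) (by positivity)] with c hc g x L hg hL hgA hgc y hy
    have hsub : closedBall y (t / L) ⊆ closedBall x ((1 / 2) ^ m / L) := by
      refine closedBall_subset_closedBall' ?_
      calc t / L + dist y x ≤ (1 / 2) ^ (m + 1) / L + (1 / 2) ^ (m + 1) / L := by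
            gcongr
            exacts [min_le_left _ _, hy]
        _ = (1 / 2) ^ m / L := by ring
    have hsub' : closedBall x ((1 / 2) ^ m / L) ⊆ closedBall x (1 / L) :=
      closedBall_subset_closedBall (by gcongr; exact pow_le_one₀ (by norm_num) (by norm_num))
    calc ‖iteratedFDeriv ℝ (m + 1) g y‖
        ≤ 2 * (t * ε / 4 * L ^ m) / (t / L) + t / L * (A * L ^ (m + 2)) :=
          norm_iteratedFDeriv_succ_le
            (hg.of_le (by exact_mod_cast (by omega : m + 2 ≤ k + 1)))
            (convex_closedBall x _) (by positivity) hsub (hc g x L hg hL hgA hgc)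
            fun z hz => hgA (m + 2) (by omega) (by omega) z (hsub' hz)
      _ = (ε / 2 + t * A) * L ^ (m + 1) := by
          field_simp
          ring
      _ ≤ ε * L ^ (m + 1) := by
          gcongr
          linarith

theorem iteratedFDeriv_sub_const {m : ℕ} (hm : 1 ≤ m) (hf : ContDiff ℝ m f) (c : F) (x : E) :
    iteratedFDeriv ℝ m (fun z => f z - c) x = iteratedFDeriv ℝ m f x := by
  rw [fun_iteratedFDeriv_sub_apply hf.contDiffAt contDiffAt_const,
    iteratedFDeriv_const_of_ne (by omega), Pi.zero_apply, sub_zero]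

theorem JetTame.eventually_exists_le_norm_sub (ht : JetTame k f) (hf : ContDiff ℝ (k + 1) f) :
    ∃ c > 0, ∀ᶠ x in comap (jetWeight k f) atTop,
      ∃ y ∈ closedBall x (1 / jetWeight k f x), c ≤ ‖f y - f x‖ := by
  set ε : ℝ := (1 / ((k : ℝ) + 1)) ^ k
  have hsmall := (Finset.eventually_all (Finset.Icc 1 k)).2 fun m hm =>
    eventually_norm_iteratedFDeriv_le_of_norm_le (E := E) (F := F) k
      (by positivity : (0 : ℝ) < k + 1) m (Finset.mem_Icc.1 hm).2 ε (by positivity)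
  obtain ⟨c, hc, hc0⟩ := (hsmall.and self_mem_nhdsWithin).exists
  refine ⟨c, hc0, ?_⟩
  filter_upwards [ht.eventually_norm_iteratedFDeriv_le hf le_rfl,
    preimage_mem_comap (Ioi_mem_atTop 0)] with x hx hx0
  have hx0 : 0 < jetWeight k f x := hx0
  by_contra! hosc
  have hD : ∀ {m}, 1 ≤ m → m ≤ k + 1 → ∀ y,
      iteratedFDeriv ℝ m (fun z => f z - f x) y = iteratedFDeriv ℝ m f y := fun hm hmk =>
    iteratedFDeriv_sub_const hm (hf.of_le (by exact_mod_cast hmk)) _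
  have hjet : jetWeight k f x ≤ k * (1 / (k + 1) * jetWeight k f x) := by
    refine jetWeight_le (by positivity) fun m hm hmk => ?_
    rw [← hD hm (by omega), mul_pow]
    refine (hc m (Finset.mem_Icc.2 ⟨hm, hmk⟩) (fun z => f z - f x) x _ (hf.sub contDiff_const) hx0
      (fun j hj hjk y hy => ?_) (fun y hy => (hosc y hy).le) x
      (mem_closedBall_self (by positivity))).trans ?_
    · rw [hD hj hjk]
      simpa using hx y hy j hj hjk
    · gcongr ?_ * _
      exact pow_le_pow_of_le_one (by positivity)
        (div_le_one_of_le₀ (by linarith [(Nat.cast_nonneg k : (0 : ℝ) ≤ k)]) (by positivity)) hmk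
  have : (k : ℝ) * (1 / (k + 1) * jetWeight k f x) < jetWeight k f x := by
    rw [← mul_assoc, mul_one_div]
    exact mul_lt_of_lt_one_left hx0 ((div_lt_one (by positivity)).2 (lt_add_one _))
  linarith

end Oscillation

section Barrier

theorem second_deriv_nonneg_of_isLocalMin {φ φ' : ℝ → ℝ} {a t₀ : ℝ}
    (hφ : ∀ t, HasDerivAt φ (φ' t) t) (hφ' : HasDerivAt φ' a t₀) (hmin : IsLocalMin φ t₀) :
    0 ≤ a := by
  by_contra! ha
  have hderiv : deriv φ = φ' := funext fun t => (hφ t).deriv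
  have hmax : IsLocalMax φ t₀ := by
    apply isLocalMax_of_deriv_deriv_neg
    · rwa [hderiv, hφ'.deriv]
    · exact hmin.deriv_eq_zero
    · exact (hφ t₀).continuousAt
  have hconst : φ =ᶠ[𝓝 t₀] fun _ => φ t₀ := by
    filter_upwards [hmin, hmax] with t hle hge using le_antisymm hge hle
  have hzero := hconst.deriv.deriv.eq_of_nhds
  rw [hderiv, hφ'.deriv] at hzero
  simp only [deriv_const'] at hzero
  exact ha.ne hzero

variable {E : Type*} [NormedAddCommGroup E] {V : E → ℝ}

section Line

variable [NormedSpace ℝ E]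

theorem hasDerivAt_line (z v : E) (t : ℝ) : HasDerivAt (fun t : ℝ => z + t • v) v t := by
  simpa using ((hasDerivAt_id t).smul_const v).const_add z

theorem hasDerivAt_comp_line (hV : Differentiable ℝ V) (z v : E) (t : ℝ) :
    HasDerivAt (fun t : ℝ => V (z + t • v)) (fderiv ℝ V (z + t • v) v) t :=
  (hV (z + t • v)).hasFDerivAt.comp_hasDerivAt t (hasDerivAt_line z v t)

theorem hasDerivAt_fderiv_comp_line (hV : ContDiff ℝ 2 V) (z v : E) (t : ℝ) :
    HasDerivAt (fun t : ℝ => fderiv ℝ V (z + t • v) v)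
      (fderiv ℝ (fderiv ℝ V) (z + t • v) v v) t := by
  have hdiff : Differentiable ℝ (fderiv ℝ V) :=
    (hV.fderiv_right (m := 1) (by norm_num)).differentiable (by norm_num)
  have hcomp : HasDerivAt (fun t : ℝ => fderiv ℝ V (z + t • v))
      (fderiv ℝ (fderiv ℝ V) (z + t • v) v) t :=
    (hdiff (z + t • v)).hasFDerivAt.comp_hasDerivAt t (hasDerivAt_line z v t)
  exact ((ContinuousLinearMap.apply ℝ ℝ v).hasFDerivAt
    (x := fderiv ℝ V (z + t • v))).comp_hasDerivAt t hcomp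

end Line

variable [InnerProductSpace ℝ E]

theorem hasDerivAt_gaussian_line (z y₀ v : E) (β ε t : ℝ) :
    HasDerivAt (fun t : ℝ => ε * Real.exp (-β * ‖z + t • v - y₀‖ ^ 2))
      (-2 * β * inner ℝ (z + t • v - y₀) v * (ε * Real.exp (-β * ‖z + t • v - y₀‖ ^ 2))) t := by
  have hnorm := ((hasDerivAt_line z v t).sub_const y₀).norm_sq
  exact ((hnorm.const_mul (-β)).exp.const_mul ε).congr_deriv (by ring)

theorem hasDerivAt_deriv_gaussian_line (z y₀ v : E) (β ε : ℝ) :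
    HasDerivAt (fun t : ℝ => -2 * β * inner ℝ (z + t • v - y₀) v *
        (ε * Real.exp (-β * ‖z + t • v - y₀‖ ^ 2)))
      ((4 * β ^ 2 * (inner ℝ (z - y₀) v) ^ 2 - 2 * β * ‖v‖ ^ 2) *
        (ε * Real.exp (-β * ‖z - y₀‖ ^ 2))) 0 := by
  have hinner : HasDerivAt (fun t : ℝ => inner ℝ (z + t • v - y₀) v) (‖v‖ ^ 2) 0 := by
    simpa using ((hasDerivAt_line z v 0).sub_const y₀).inner ℝ (hasDerivAt_const (0 : ℝ) v)
  refine ((hinner.const_mul (-2 * β)).mul (hasDerivAt_gaussian_line z y₀ v β ε 0)).congr_deriv ?_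
  simp only [zero_smul, add_zero]
  ring

theorem fderiv_of_isLocalMin_sub_gaussian (hV : ContDiff ℝ 2 V) {z y₀ : E} {β ε : ℝ}
    (hmin : IsLocalMin (fun y => V y - ε * Real.exp (-β * ‖y - y₀‖ ^ 2)) z) (v : E) :
    fderiv ℝ V z v = -2 * β * inner ℝ (z - y₀) v * (ε * Real.exp (-β * ‖z - y₀‖ ^ 2)) ∧
    (4 * β ^ 2 * (inner ℝ (z - y₀) v) ^ 2 - 2 * β * ‖v‖ ^ 2) *
      (ε * Real.exp (-β * ‖z - y₀‖ ^ 2)) ≤ fderiv ℝ (fderiv ℝ V) z v v := by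
  have hderiv (t : ℝ) := (hasDerivAt_comp_line (hV.differentiable (by norm_num)) z v t).sub
    (hasDerivAt_gaussian_line z y₀ v β ε t)
  have hderiv₂ := (hasDerivAt_fderiv_comp_line hV z v 0).sub
    (hasDerivAt_deriv_gaussian_line z y₀ v β ε)
  have hmin₀ : IsLocalMin (fun y => V y - ε * Real.exp (-β * ‖y - y₀‖ ^ 2)) (z + (0 : ℝ) • v) := by
    rwa [zero_smul, add_zero]
  have hmin_line := hmin₀.comp_continuous (g := fun t : ℝ => z + t • v) (by fun_prop)
  have hfirst := hmin_line.hasDerivAt_eq_zero (hderiv 0)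
  have hsecond := second_deriv_nonneg_of_isLocalMin hderiv hderiv₂ hmin_line
  simp only [zero_smul, add_zero] at hfirst hsecond
  exact ⟨sub_eq_zero.1 hfirst, sub_nonneg.1 hsecond⟩

theorem gaussian_le_of_hessian_pinched (hV : ContDiff ℝ 2 V) {z y₀ : E} {β ε C T : ℝ} (hβ : 0 ≤ β)
    (hε : 0 < ε) (hC : 0 < C) (hεC : 2 * C * ε ≤ 1) (hq : 2 + C ≤ β * ‖z - y₀‖ ^ 2)
    (hmin : IsLocalMin (fun y => V y - ε * Real.exp (-β * ‖y - y₀‖ ^ 2)) z)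
    (hpinch : ∀ b, 0 ≤ b → (∀ w, -b * ‖w‖ ^ 2 ≤ fderiv ℝ (fderiv ℝ V) z w w) →
      ∀ v, ‖v‖ = 1 → fderiv ℝ (fderiv ℝ V) z v v ≤ C * (b + ‖fderiv ℝ V z‖ ^ 2 + T)) :
    2 * β * (ε * Real.exp (-β * ‖z - y₀‖ ^ 2)) ≤ C * T := by
  have hcond := fderiv_of_isLocalMin_sub_gaussian hV hmin
  set W := ε * Real.exp (-β * ‖z - y₀‖ ^ 2) with hW
  set d := z - y₀
  have hW0 : 0 ≤ W := by positivity
  have hWε : W ≤ ε := mul_le_of_le_one_right hε.le (Real.exp_le_one_iff.2 (by nlinarith))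
  have hd0 : 0 < ‖d‖ := by
    by_contra! hle
    rw [le_antisymm hle (norm_nonneg d)] at hq
    linarith
  have hgrad : ‖fderiv ℝ V z‖ ≤ 2 * β * ‖d‖ * W := by
    refine ContinuousLinearMap.opNorm_le_bound _ (by positivity) fun v => ?_
    have hcs : |inner ℝ d v| ≤ ‖d‖ * ‖v‖ := abs_real_inner_le_norm d v
    rw [(hcond v).1, Real.norm_eq_abs, abs_mul, abs_mul, abs_of_nonneg hW0,
      show |-2 * β| = 2 * β by rw [abs_mul, abs_of_nonneg hβ]; norm_num]
    calc 2 * β * |inner ℝ d v| * W ≤ 2 * β * (‖d‖ * ‖v‖) * W := by gcongr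
      _ = 2 * β * ‖d‖ * W * ‖v‖ := by ring
  have hlower (w : E) : -(2 * β * W) * ‖w‖ ^ 2 ≤ fderiv ℝ (fderiv ℝ V) z w w := by
    refine le_trans ?_ (hcond w).2
    have : 0 ≤ 4 * β ^ 2 * inner ℝ d w ^ 2 * W := by positivity
    linarith
  have hv : ‖‖d‖⁻¹ • d‖ = 1 := norm_smul_inv_norm (𝕜 := ℝ) (norm_pos_iff.1 hd0)
  have hdv : inner ℝ d (‖d‖⁻¹ • d) = ‖d‖ := by
    rw [inner_smul_right, real_inner_self_eq_norm_mul_norm, inv_mul_cancel_left₀ hd0.ne']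
  have hradial := ((hcond (‖d‖⁻¹ • d)).2).trans (hpinch _ (by positivity) hlower _ hv)
  rw [hv, hdv] at hradial
  have hgradsq : C * ‖fderiv ℝ V z‖ ^ 2 ≤ C * (2 * β * ‖d‖ * W) ^ 2 := by gcongr
  have habsorb : 2 * C * W * (2 * (β * ‖d‖ ^ 2) * (β * W)) ≤ 1 * (2 * (β * ‖d‖ ^ 2) * (β * W)) := by
    gcongr
    exact (mul_le_mul_of_nonneg_left hWε (by positivity)).trans hεC
  have hgain : 2 * (2 + C) * (β * W) ≤ 2 * (β * ‖d‖ ^ 2) * (β * W) := by gcongr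
  linarith

end Barrier

section Descent

variable {E : Type*} [NormedAddCommGroup E] [ProperSpace E] {V : E → ℝ}

theorem exists_isLocalMin_sub_gaussian (hV : Continuous V) {x y₀ : E} {β ε s r ρ : ℝ} (hβ : 0 ≤ β)
    (hε : 0 < ε) (hs : dist x y₀ ≤ s) (hsρ : s ≤ ρ)
    (hinner : ∀ y ∈ closedBall y₀ r, V x + ε ≤ V y)
    (houter : ∀ y ∈ sphere y₀ ρ,
      V x - ε * (Real.exp (-β * s ^ 2) - Real.exp (-β * ρ ^ 2)) < V y) :
    ∃ z, r < dist z y₀ ∧ dist z y₀ < ρ ∧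
      IsLocalMin (fun y => V y - ε * Real.exp (-β * ‖y - y₀‖ ^ 2)) z := by
  have hx : V x - ε * Real.exp (-β * ‖x - y₀‖ ^ 2) ≤ V x - ε * Real.exp (-β * s ^ 2) := by
    have : ‖x - y₀‖ ^ 2 ≤ s ^ 2 := by gcongr; rwa [← dist_eq_norm]
    gcongr ?_ - ε * Real.exp ?_
    nlinarith
  have hcont : Continuous fun y => V y - ε * Real.exp (-β * ‖y - y₀‖ ^ 2) := by fun_prop
  obtain ⟨z, hz, hzmin⟩ := (isCompact_closedBall y₀ ρ).exists_isMinOn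
    ⟨x, hs.trans hsρ⟩ hcont.continuousOn
  have hzx := hzmin (show x ∈ closedBall y₀ ρ from hs.trans hsρ)
  simp only [Set.mem_ofPred_eq] at hzx
  have hzρ : dist z y₀ < ρ := by
    refine lt_of_le_of_ne hz fun heq => ?_
    have := houter z heq
    rw [dist_eq_norm] at heq
    rw [heq] at hzx
    linarith
  refine ⟨z, ?_, hzρ, hzmin.isLocalMin (closedBall_mem_nhds_of_mem hzρ)⟩
  by_contra! hzr
  have hexp : Real.exp (-β * ‖z - y₀‖ ^ 2) ≤ 1 := Real.exp_le_one_iff.2 (by nlinarith)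
  have hexp' : 0 < ε * Real.exp (-β * s ^ 2) := by positivity
  have := hinner z hzr
  nlinarith

variable [InnerProductSpace ℝ E]

theorem exists_le_sub_of_hessian_pinched (hV : ContDiff ℝ 2 V) {x y₀ : E} {L r α ε C T : ℝ}
    (hL : 0 < L) (hr : 0 < r) (hα : 0 < α) (hε : 0 < ε) (hC : 0 < C) (hεC : 2 * C * ε ≤ 1)
    (hαr : 2 + C ≤ α * r ^ 2) (hy₀ : y₀ ∈ closedBall x (1 / L))
    (hinner : ∀ y ∈ closedBall y₀ (r / L), V x + ε ≤ V y)
    (hpinch : ∀ z ∈ closedBall x (3 / L), ∀ b, 0 ≤ b →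
      (∀ w, -b * ‖w‖ ^ 2 ≤ fderiv ℝ (fderiv ℝ V) z w w) →
      ∀ v, ‖v‖ = 1 → fderiv ℝ (fderiv ℝ V) z v v ≤ C * (b + ‖fderiv ℝ V z‖ ^ 2 + T))
    (hT : C * T < 2 * (α * L ^ 2) * (ε * Real.exp (-(4 * α)))) :
    ∃ y ∈ closedBall x (3 / L), V y ≤ V x - ε * (Real.exp (-α) - Real.exp (-(4 * α))) := by
  have hball : ∀ z, dist z y₀ ≤ 2 / L → z ∈ closedBall x (3 / L) := fun z hz =>
    calc dist z x ≤ dist z y₀ + dist y₀ x := dist_triangle _ _ _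
      _ ≤ 2 / L + 1 / L := add_le_add hz hy₀
      _ = 3 / L := by ring
  have hs : -(α * L ^ 2) * (1 / L) ^ 2 = -α := by field_simp
  have hρ : -(α * L ^ 2) * (2 / L) ^ 2 = -(4 * α) := by
    field_simp
    norm_num
  by_contra! hno
  obtain ⟨z, hrz, hzρ, hmin⟩ := exists_isLocalMin_sub_gaussian (β := α * L ^ 2) (s := 1 / L)
    (ρ := 2 / L) hV.continuous (by positivity) hε (dist_comm x y₀ ▸ hy₀) (by gcongr; norm_num)
    hinner fun y hy => by
      rw [hs, hρ]
      exact hno y (hball y (mem_sphere.1 hy).le)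
  have hnear : α * L ^ 2 * ‖z - y₀‖ ^ 2 ≤ 4 * α := by
    calc α * L ^ 2 * ‖z - y₀‖ ^ 2 ≤ α * L ^ 2 * (2 / L) ^ 2 := by
          rw [← dist_eq_norm]
          gcongr
      _ = 4 * α := by field_simp; norm_num
  have hfar : 2 + C ≤ α * L ^ 2 * ‖z - y₀‖ ^ 2 := by
    calc 2 + C ≤ α * L ^ 2 * (r / L) ^ 2 := hαr.trans_eq (by field_simp)
      _ ≤ α * L ^ 2 * ‖z - y₀‖ ^ 2 := by
          rw [← dist_eq_norm]
          gcongr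
  have hle := gaussian_le_of_hessian_pinched hV (by positivity) hε hC hεC hfar hmin
    (hpinch z (hball z hzρ.le))
  have hge : 2 * (α * L ^ 2) * (ε * Real.exp (-(4 * α))) ≤
      2 * (α * L ^ 2) * (ε * Real.exp (-(α * L ^ 2) * ‖z - y₀‖ ^ 2)) := by
    gcongr
    linarith
  linarith

end Descent

section UniformDescent

variable {E : Type*} [NormedAddCommGroup E]

/-- Assumption (i) in terms of `jetWeight`: an upper bound for the Hessian of `V` by its negative
part (any `b` with `-b ≤ D²V`), the squared gradient and a term of lower order than `Φ ^ 2`. -/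
def HessianPinched [NormedSpace ℝ E] (k : ℕ) (V : E → ℝ) : Prop :=
  ∃ C > 0, ∃ δ ∈ Set.Ioo (0 : ℝ) 1, ∀ x b, 0 ≤ b →
    (∀ w, -b * ‖w‖ ^ 2 ≤ fderiv ℝ (fderiv ℝ V) x w w) → ∀ v, ‖v‖ = 1 →
      fderiv ℝ (fderiv ℝ V) x v v ≤
        C * (b + ‖fderiv ℝ V x‖ ^ 2 + (1 + jetWeight k V x) ^ (2 - δ))

theorem JetTame.eventually_norm_fderiv_le {F : Type*} [NormedSpace ℝ E] [NormedAddCommGroup F]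
    [NormedSpace ℝ F] {f : E → F} {k : ℕ} (ht : JetTame k f) (hf : ContDiff ℝ (k + 1) f) {R : ℝ}
    (hR : 1 ≤ R) :
    ∀ᶠ x in comap (jetWeight k f) atTop, ∀ y ∈ closedBall x (R / jetWeight k f x),
      ‖fderiv ℝ f y‖ ≤ (k + 1) * R ^ k * jetWeight k f x := by
  filter_upwards [ht.eventually_norm_iteratedFDeriv_le hf hR] with x hx y hy
  simpa only [norm_iteratedFDeriv_one, pow_one] using hx y hy 1 le_rfl (by omega)

theorem norm_sub_le_of_norm_fderiv_le {F : Type*} [NormedSpace ℝ E] [NormedAddCommGroup F]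
    [NormedSpace ℝ F] {f : E → F} (hf : Differentiable ℝ f) {x y z : E} {A r : ℝ}
    (hA : ∀ w ∈ closedBall x r, ‖fderiv ℝ f w‖ ≤ A) (hy : y ∈ closedBall x r)
    (hz : z ∈ closedBall x r) : ‖f z - f y‖ ≤ A * dist z y := by
  rw [dist_eq_norm]
  exact (convex_closedBall x r).norm_image_sub_le_of_norm_fderiv_le
    (fun w _ => hf w) hA hy hz

variable [InnerProductSpace ℝ E] {V : E → ℝ} {k : ℕ}

theorem HessianPinched.eventually_le (hp : HessianPinched k V) :
    ∃ C > 0, ∀ H, 0 ≤ H → ∀ η > 0, ∀ᶠ L in atTop, ∃ T, C * T < η * L ^ 2 ∧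
      ∀ z, jetWeight k V z ≤ H * L → ∀ b, 0 ≤ b →
        (∀ w, -b * ‖w‖ ^ 2 ≤ fderiv ℝ (fderiv ℝ V) z w w) → ∀ v, ‖v‖ = 1 →
          fderiv ℝ (fderiv ℝ V) z v v ≤ C * (b + ‖fderiv ℝ V z‖ ^ 2 + T) := by
  obtain ⟨C, hC, δ, hδ, hp⟩ := hp
  refine ⟨C, hC, fun H hH η hη => ?_⟩
  filter_upwards [eventually_mul_rpow_le C hH hδ.1 (hδ.2.le.trans one_le_two) (half_pos hη),
    eventually_gt_atTop 0] with L hL hL0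
  refine ⟨(1 + H * L) ^ (2 - δ), ?_, fun z hz b hb hlower v hv => ?_⟩
  · rw [Real.rpow_two] at hL
    nlinarith [mul_pos hη (pow_pos hL0 2)]
  · refine (hp z b hb hlower v hv).trans ?_
    have := jetWeight_nonneg k V z
    gcongr
    linarith [hδ.2]

variable [ProperSpace E]

theorem exists_le_sub_of_osc (hV : ContDiff ℝ 2 V) {x y₀ : E} {L A r α ε C T : ℝ} (hL : 0 < L)
    (hA : 0 ≤ A) (hr : 0 < r) (hr₁ : r ≤ 1) (hα : 0 < α) (hε : 0 < ε) (hC : 0 < C)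
    (hεC : 2 * C * ε ≤ 1) (hαr : 2 + C ≤ α * r ^ 2) (hrε : A * r ≤ ε)
    (hy₀ : y₀ ∈ closedBall x (1 / L)) (hosc : 2 * ε ≤ |V y₀ - V x|)
    (hgrad : ∀ z ∈ closedBall x (3 / L), ‖fderiv ℝ V z‖ ≤ A * L)
    (hpinch : ∀ z ∈ closedBall x (3 / L), ∀ b, 0 ≤ b →
      (∀ w, -b * ‖w‖ ^ 2 ≤ fderiv ℝ (fderiv ℝ V) z w w) →
      ∀ v, ‖v‖ = 1 → fderiv ℝ (fderiv ℝ V) z v v ≤ C * (b + ‖fderiv ℝ V z‖ ^ 2 + T))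
    (hT : C * T < 2 * (α * L ^ 2) * (ε * Real.exp (-(4 * α)))) :
    ∃ y ∈ closedBall x (3 / L), V y ≤ V x - ε * (Real.exp (-α) - Real.exp (-(4 * α))) := by
  have hball : closedBall y₀ (r / L) ⊆ closedBall x (3 / L) := by
    refine closedBall_subset_closedBall' ?_
    calc r / L + dist y₀ x ≤ 1 / L + 1 / L := by
          gcongr
          exact hy₀
      _ ≤ 3 / L := by
          rw [← add_div]
          gcongr
          norm_num
  have hy₀' : y₀ ∈ closedBall x (3 / L) := hball (mem_closedBall_self (by positivity))
  rcases le_abs.1 hosc with hup | hdown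
  · refine exists_le_sub_of_hessian_pinched hV hL hr hα hε hC hεC hαr hy₀ (fun y hy => ?_) hpinch hT
    have hnear : ‖V y - V y₀‖ ≤ ε :=
      calc ‖V y - V y₀‖ ≤ A * L * dist y y₀ :=
            norm_sub_le_of_norm_fderiv_le (hV.differentiable (by norm_num)) hgrad hy₀' (hball hy)
        _ ≤ A * L * (r / L) := by
            gcongr
            exact hy
        _ ≤ ε := by rwa [mul_assoc, mul_div_cancel₀ _ hL.ne']
    linarith [(abs_le.1 hnear).1]
  · refine ⟨y₀, hy₀', ?_⟩
    have hexp : Real.exp (-α) - Real.exp (-(4 * α)) ≤ 1 := by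
      linarith [Real.exp_le_one_iff.2 (by linarith : -α ≤ 0), Real.exp_pos (-(4 * α))]
    nlinarith

theorem exists_uniform_descent (hk : 1 ≤ k) (hV : ContDiff ℝ (k + 1) V) (ht : JetTame k V)
    (hp : HessianPinched k V) :
    ∃ c > 0, ∀ᶠ x in comap (jetWeight k V) atTop,
      ∃ y ∈ closedBall x (3 / jetWeight k V x), V y ≤ V x - c := by
  have hV₂ : ContDiff ℝ 2 V := hV.of_le (by exact_mod_cast Nat.succ_le_succ hk)
  obtain ⟨c₁, hc₁, hosc⟩ := ht.eventually_exists_le_norm_sub hV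
  obtain ⟨C, hC, hpinch⟩ := hp.eventually_le
  set A : ℝ := (k + 1) * 3 ^ k
  have hA : 0 < A := by positivity
  set ε : ℝ := min (c₁ / 2) (1 / (2 * C))
  have hε : 0 < ε := by positivity
  have hεC : 2 * C * ε ≤ 1 := by
    rw [mul_comm, ← le_div_iff₀ (by positivity)]
    exact min_le_right _ _
  set r : ℝ := min 1 (ε / A)
  have hr : 0 < r := by positivity
  have hrε : A * r ≤ ε := by
    rw [mul_comm, ← le_div_iff₀ hA]
    exact min_le_right _ _
  set α : ℝ := (2 + C) / r ^ 2 with hα_def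
  have hα : 0 < α := by positivity
  have hαr : 2 + C ≤ α * r ^ 2 := by rw [hα_def, div_mul_cancel₀ _ (by positivity)]
  have hexp : Real.exp (-(4 * α)) < Real.exp (-α) := Real.exp_lt_exp.2 (by linarith)
  refine ⟨ε * (Real.exp (-α) - Real.exp (-(4 * α))), mul_pos hε (sub_pos.2 hexp), ?_⟩
  filter_upwards [hosc, ht.eventually_comparable hV (R := 3) (by norm_num),
    ht.eventually_norm_fderiv_le hV (R := 3) (by norm_num),
    (hpinch ((k + 1) ^ 2 * 3 ^ k) (by positivity) (2 * α * (ε * Real.exp (-(4 * α))))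
      (by positivity)).comap _, preimage_mem_comap (Ioi_mem_atTop 0)]
    with x ⟨y₀, hy₀, hosc⟩ hcomp hgrad ⟨T, hT, hpinch⟩ hL
  refine exists_le_sub_of_osc hV₂ hL hA.le hr (min_le_left _ _) hα hε hC hεC hαr hrε hy₀
    (le_trans ?_ hosc) hgrad (fun z hz => hpinch z (hcomp z hz).1) (by linarith)
  linarith [min_le_left (c₁ / 2) (1 / (2 * C))]

end UniformDescent

section Chain

theorem exists_iterated_descent {X : Type*} [PseudoMetricSpace X] {V : X → ℝ} {x : X} {r ρ c : ℝ}
    (hr : 0 ≤ r) (hstep : ∀ z ∈ closedBall x ρ, ∃ y ∈ closedBall z r, V y ≤ V z - c) (J : ℕ)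
    (hJ : J * r ≤ ρ) : ∃ z ∈ closedBall x (J * r), V z ≤ V x - c * J := by
  induction J with
  | zero => exact ⟨x, by simp, by simp⟩
  | succ J ih =>
    push_cast at hJ ⊢
    obtain ⟨z, hz, hVz⟩ := ih (by linarith)
    obtain ⟨y, hy, hVy⟩ := hstep z (closedBall_subset_closedBall (by linarith) hz)
    refine ⟨y, ?_, by linarith⟩
    rw [mem_closedBall] at hz hy ⊢
    linarith [dist_triangle y z x]

variable {E : Type*} [NormedAddCommGroup E]

theorem JetTame.eventually_forall_closedBall {F : Type*} [NormedSpace ℝ E] [NormedAddCommGroup F]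
    [NormedSpace ℝ F] {f : E → F} {k : ℕ} (ht : JetTame k f) (hf : ContDiff ℝ (k + 1) f)
    {p : E → Prop} (hp : ∀ᶠ x in comap (jetWeight k f) atTop, p x) {S : ℝ} (hS : 1 ≤ S) :
    ∀ᶠ x in comap (jetWeight k f) atTop, ∀ y ∈ closedBall x (S ^ k / jetWeight k f x), p y := by
  obtain ⟨Λ, -, hΛ⟩ := (atTop_basis.comap (jetWeight k f)).eventually_iff.1 hp
  filter_upwards [ht.eventually_jetWeight_le hf hS,
    preimage_mem_comap (Ici_mem_atTop ((k + 1) ^ 2 * S ^ (k - 1) * Λ))] with x hle hx y hy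
  exact hΛ (le_of_mul_le_mul_left (le_trans hx (hle y hy)) (by positivity))

variable [InnerProductSpace ℝ E] [ProperSpace E] {V : E → ℝ} {k : ℕ}

/-- The radius, in units of `1 / Φ x` with `Φ` the jet weight of order `k`, of a ball around `x`
that contains a chain of `J` descent steps starting at `x`. -/
def chainRadius (k J : ℕ) : ℝ := (3 * (k + 1) ^ 2 * J) ^ k

/- The weight drops by at most `(k + 1) ^ 2 * S ^ (k - 1)` within distance `S ^ k / Φ x`, which
leaves room for `J` steps of the uniform descent as soon as `S = 3 * (k + 1) ^ 2 * J`. -/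
theorem exists_descent_chain (hk : 1 ≤ k) (hV : ContDiff ℝ (k + 1) V) (ht : JetTame k V)
    (hp : HessianPinched k V) :
    ∃ c > 0, ∀ J : ℕ, 1 ≤ J → ∀ᶠ x in comap (jetWeight k V) atTop,
      ∃ z ∈ closedBall x (chainRadius k J / jetWeight k V x), V z ≤ V x - c * J := by
  obtain ⟨c, hc, hdescent⟩ := exists_uniform_descent hk hV ht hp
  refine ⟨c, hc, fun J hJ => ?_⟩
  set S : ℝ := 3 * (k + 1) ^ 2 * J with hS_def
  have hJ' : (1 : ℝ) ≤ J := by exact_mod_cast hJ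
  have hS : 1 ≤ S := by
    have : (1 : ℝ) ≤ (k + 1) ^ 2 := one_le_pow₀ (by linarith [(Nat.cast_nonneg k : (0 : ℝ) ≤ k)])
    nlinarith
  filter_upwards [ht.eventually_forall_closedBall hV hdescent hS, ht.eventually_jetWeight_le hV hS,
    preimage_mem_comap (Ioi_mem_atTop 0)] with x hdescent hlow hx
  have hx : 0 < jetWeight k V x := hx
  set P : ℝ := (k + 1) ^ 2 * S ^ (k - 1) with hP_def
  have hP : 0 < P := by positivity
  have hJP : J * (3 * P / jetWeight k V x) = S ^ k / jetWeight k V x := by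
    rw [← pow_sub_one_mul (Nat.ne_of_gt hk) S, hP_def]
    nth_rw 3 [hS_def]
    ring
  rw [chainRadius, ← hS_def, ← hJP]
  refine exists_iterated_descent (ρ := S ^ k / jetWeight k V x) (by positivity) (fun z hz => ?_) J
    hJP.le
  obtain ⟨y, hy, hVy⟩ := hdescent z hz
  refine ⟨y, closedBall_subset_closedBall ?_ hy, hVy⟩
  have hz₀ : 0 < jetWeight k V z := pos_of_mul_pos_right (hx.trans_le (hlow z hz)) hP.le
  rw [div_le_div_iff₀ hz₀ hx]
  linarith [hlow z hz]

theorem one_le_chainRadius (k : ℕ) {J : ℕ} (hJ : 1 ≤ J) : 1 ≤ chainRadius k J := by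
  have hJ' : (1 : ℝ) ≤ J := by exact_mod_cast hJ
  have hk1 : (1 : ℝ) ≤ ((k : ℝ) + 1) ^ 2 := one_le_pow₀ (by simp)
  exact one_le_pow₀ (by nlinarith)

end Chain

section LocalEstimate

theorem sq_intervalIntegral_le {g : ℝ → ℝ} (hg : Continuous g) :
    (∫ t in (0 : ℝ)..1, g t) ^ 2 ≤ ∫ t in (0 : ℝ)..1, g t ^ 2 := by
  have : IsProbabilityMeasure (volume.restrict (Set.Ioc (0 : ℝ) 1)) := ⟨by simp⟩
  have hint {h : ℝ → ℝ} (hh : Continuous h) : IntegrableOn h (Set.Ioc 0 1) :=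
    hh.integrableOn_Icc.mono_set Set.Ioc_subset_Icc_self
  simp only [intervalIntegral.integral_of_le zero_le_one]
  exact (even_two.convexOn_pow).map_integral_le (continuous_pow 2).continuousOn isClosed_univ
    (by simp) (hint hg) (hint (hg.pow 2))

variable {E : Type*} [NormedAddCommGroup E] [NormedSpace ℝ E]

/-- The integrand `∇u + τ u ∇V` of the Witten quadratic form, as a covector. -/
def twistedDeriv (τ : ℝ) (V u : E → ℝ) (x : E) : E →L[ℝ] ℝ :=
  fderiv ℝ u x + (τ * u x) • fderiv ℝ V x

variable {V u : E → ℝ} {τ : ℝ}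

theorem continuous_twistedDeriv (hV : ContDiff ℝ 1 V) (hu : ContDiff ℝ 1 u) :
    Continuous (twistedDeriv τ V u) :=
  (hu.continuous_fderiv one_ne_zero).add
    ((continuous_const.mul hu.continuous).smul (hV.continuous_fderiv one_ne_zero))

theorem hasCompactSupport_twistedDeriv (hu : HasCompactSupport u) :
    HasCompactSupport (twistedDeriv τ V u) := by
  have hsmul : HasCompactSupport fun x => (τ * u x) • fderiv ℝ V x :=
    (hu.mul_left (f := fun _ => τ)).smul_right
  exact (hu.fderiv ℝ).add hsmul

theorem hasDerivAt_exp_mul_line (hV : Differentiable ℝ V) (hu : Differentiable ℝ u) (p h : E)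
    (t : ℝ) :
    HasDerivAt (fun t : ℝ => u (p + t • h) * Real.exp (τ * (V (p + t • h) - V p)))
      (twistedDeriv τ V u (p + t • h) h * Real.exp (τ * (V (p + t • h) - V p))) t := by
  have hexp := (((hasDerivAt_comp_line hV p h t).sub_const (V p)).const_mul τ).exp
  refine ((hasDerivAt_comp_line hu p h t).mul hexp).congr_deriv ?_
  simp only [twistedDeriv, add_apply, smul_apply, smul_eq_mul]
  ring

end LocalEstimate

section LocalMass

theorem exp_mul_sq (a b : ℝ) : Real.exp (a * b) ^ 2 = Real.exp (2 * a * b) := by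
  rw [← Real.exp_nat_mul]
  ring_nf

variable {E : Type*} [NormedAddCommGroup E] [NormedSpace ℝ E] {V u : E → ℝ} {τ : ℝ}

theorem integral_sq_twistedDeriv_line_le (hV : ContDiff ℝ 1 V) (hu : ContDiff ℝ 1 u) (hτ : 0 ≤ τ)
    {p h : E} {M : ℝ} (hM : ∀ t ∈ Set.Icc (0 : ℝ) 1, V (p + t • h) ≤ V p + M) :
    ∫ t in (0 : ℝ)..1,
        (twistedDeriv τ V u (p + t • h) h * Real.exp (τ * (V (p + t • h) - V p))) ^ 2 ≤
      ‖h‖ ^ 2 * Real.exp (2 * τ * M) * ∫ t in (0 : ℝ)..1, ‖twistedDeriv τ V u (p + t • h)‖ ^ 2 := by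
  have hG := continuous_twistedDeriv (τ := τ) hV hu
  have hVc := hV.continuous
  rw [← intervalIntegral.integral_const_mul]
  refine intervalIntegral.integral_mono_on zero_le_one
    (Continuous.intervalIntegrable (by fun_prop) _ _)
    (Continuous.intervalIntegrable (by fun_prop) _ _) fun t ht => ?_
  have hle : (twistedDeriv τ V u (p + t • h) h) ^ 2 ≤
      (‖twistedDeriv τ V u (p + t • h)‖ * ‖h‖) ^ 2 := by
    rw [← sq_abs]
    gcongr
    exact (twistedDeriv τ V u (p + t • h)).le_opNorm h
  rw [mul_pow, exp_mul_sq]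
  calc (twistedDeriv τ V u (p + t • h) h) ^ 2 * Real.exp (2 * τ * (V (p + t • h) - V p))
      ≤ (‖twistedDeriv τ V u (p + t • h)‖ * ‖h‖) ^ 2 * Real.exp (2 * τ * M) := by
        gcongr
        linarith [hM t ht]
    _ = ‖h‖ ^ 2 * Real.exp (2 * τ * M) * ‖twistedDeriv τ V u (p + t • h)‖ ^ 2 := by ring

theorem sq_le_of_descent (hV : ContDiff ℝ 1 V) (hu : ContDiff ℝ 1 u) (hτ : 0 ≤ τ) {p h : E}
    {D M : ℝ} (hD : V (p + h) ≤ V p - D)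
    (hM : ∀ t ∈ Set.Icc (0 : ℝ) 1, V (p + t • h) ≤ V p + M) :
    u p ^ 2 ≤ 2 * Real.exp (-(2 * τ * D)) * u (p + h) ^ 2 +
      2 * ‖h‖ ^ 2 * Real.exp (2 * τ * M) *
        ∫ t in (0 : ℝ)..1, ‖twistedDeriv τ V u (p + t • h)‖ ^ 2 := by
  set v : ℝ → ℝ := fun t => u (p + t • h) * Real.exp (τ * (V (p + t • h) - V p)) with hv
  set v' : ℝ → ℝ := fun t =>
    twistedDeriv τ V u (p + t • h) h * Real.exp (τ * (V (p + t • h) - V p))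
  have hG := continuous_twistedDeriv (τ := τ) hV hu
  have hVc := hV.continuous
  have hv'c : Continuous v' := by fun_prop
  have hftc : ∫ t in (0 : ℝ)..1, v' t = v 1 - u p := by
    rw [intervalIntegral.integral_eq_sub_of_hasDerivAt (f := v) (fun t _ => hasDerivAt_exp_mul_line
      (hV.differentiable one_ne_zero) (hu.differentiable one_ne_zero) p h t)
      (hv'c.intervalIntegrable _ _)]
    simp [hv]
  have hend : v 1 ^ 2 ≤ Real.exp (-(2 * τ * D)) * u (p + h) ^ 2 := by
    rw [hv, mul_pow, one_smul, exp_mul_sq, mul_comm]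
    gcongr
    nlinarith
  have hint : ∫ t in (0 : ℝ)..1, v' t ^ 2 ≤ ‖h‖ ^ 2 * Real.exp (2 * τ * M) *
      ∫ t in (0 : ℝ)..1, ‖twistedDeriv τ V u (p + t • h)‖ ^ 2 :=
    integral_sq_twistedDeriv_line_le hV hu hτ hM
  have hcs := sq_intervalIntegral_le hv'c
  have hsplit : u p ^ 2 ≤ 2 * v 1 ^ 2 + 2 * (v 1 - u p) ^ 2 := by
    nlinarith [sq_nonneg (2 * v 1 - u p)]
  rw [hftc] at hcs
  linarith

theorem add_smul_mem_closedBall {x p h : E} {r r' t : ℝ} (hr : r + ‖h‖ ≤ r')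
    (hp : p ∈ closedBall x r) (ht : t ∈ Set.Icc (0 : ℝ) 1) : p + t • h ∈ closedBall x r' := by
  rw [mem_closedBall_iff_norm] at hp ⊢
  calc ‖p + t • h - x‖ = ‖(p - x) + t • h‖ := by rw [add_sub_right_comm]
    _ ≤ r + 1 * ‖h‖ := (norm_add_le _ _).trans (by
        rw [norm_smul, Real.norm_of_nonneg ht.1]
        gcongr
        exact ht.2)
    _ ≤ r' := by rwa [one_mul]

variable [MeasurableSpace E] [BorelSpace E] {μ : Measure E}

theorem setLIntegral_closedBall_add_le [μ.IsAddRightInvariant] (φ : E → ENNReal) {x h : E}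
    {r r' : ℝ} (hr : r + ‖h‖ ≤ r') :
    ∫⁻ p in closedBall x r, φ (p + h) ∂μ ≤ ∫⁻ p in closedBall x r', φ p ∂μ := by
  rw [← lintegral_indicator measurableSet_closedBall,
    ← lintegral_indicator measurableSet_closedBall,
    ← lintegral_add_right_eq_self ((closedBall x r').indicator φ) h]
  refine lintegral_mono fun p => ?_
  by_cases hp : p ∈ closedBall x r
  · have hmem : p + h ∈ closedBall x r' := by
      simpa using add_smul_mem_closedBall hr hp (t := 1) (by simp)
    rw [Set.indicator_of_mem hp, Set.indicator_of_mem hmem]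
  · simp [Set.indicator_of_notMem hp]

variable [SFinite μ] [μ.IsAddRightInvariant] [SecondCountableTopology E]

theorem setLIntegral_closedBall_line_le {φ : E → ENNReal} (hφ : Measurable φ) {x h : E} {r r' : ℝ}
    (hr : r + ‖h‖ ≤ r') :
    ∫⁻ p in closedBall x r, (∫⁻ t in Set.Ioc (0 : ℝ) 1, φ (p + t • h)) ∂μ ≤
      ∫⁻ p in closedBall x r', φ p ∂μ := by
  have hmeas : Measurable (Function.uncurry fun (p : E) (t : ℝ) => φ (p + t • h)) :=
    hφ.comp (by fun_prop)
  rw [lintegral_lintegral_swap hmeas.aemeasurable]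
  calc ∫⁻ t in Set.Ioc (0 : ℝ) 1, ∫⁻ p in closedBall x r, φ (p + t • h) ∂μ
      ≤ ∫⁻ _ in Set.Ioc (0 : ℝ) 1, ∫⁻ p in closedBall x r', φ p ∂μ := by
        refine setLIntegral_mono' measurableSet_Ioc fun t ht =>
          setLIntegral_closedBall_add_le φ (le_trans ?_ hr)
        rw [norm_smul, Real.norm_of_nonneg ht.1.le]
        gcongr
        exact mul_le_of_le_one_left (norm_nonneg h) ht.2
    _ = ∫⁻ p in closedBall x r', φ p ∂μ := by simp

theorem setLIntegral_sq_le_of_descent (hV : ContDiff ℝ 1 V) (hu : ContDiff ℝ 1 u) (hτ : 0 ≤ τ)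
    {x h : E} {r r' D M : ℝ} (hr : r + ‖h‖ ≤ r')
    (hD : ∀ p ∈ closedBall x r, V (p + h) ≤ V p - D)
    (hM : ∀ p ∈ closedBall x r, ∀ t ∈ Set.Icc (0 : ℝ) 1, V (p + t • h) ≤ V p + M) :
    ∫⁻ p in closedBall x r, ENNReal.ofReal (u p ^ 2) ∂μ ≤
      ENNReal.ofReal (2 * Real.exp (-(2 * τ * D))) *
        ∫⁻ p in closedBall x r', ENNReal.ofReal (u p ^ 2) ∂μ +
      ENNReal.ofReal (2 * ‖h‖ ^ 2 * Real.exp (2 * τ * M)) *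
        ∫⁻ p in closedBall x r', ENNReal.ofReal (‖twistedDeriv τ V u p‖ ^ 2) ∂μ := by
  have hG := continuous_twistedDeriv (τ := τ) hV hu
  have huc := hu.continuous
  have hψ : Measurable fun p => ENNReal.ofReal (‖twistedDeriv τ V u p‖ ^ 2) := by fun_prop
  have hline : Measurable fun q : E × ℝ =>
      ENNReal.ofReal (‖twistedDeriv τ V u (q.1 + q.2 • h)‖ ^ 2) := hψ.comp (by fun_prop)
  have hφh : Measurable fun p => ENNReal.ofReal (u (p + h) ^ 2) := by fun_prop
  have hpointwise : ∀ p ∈ closedBall x r, ENNReal.ofReal (u p ^ 2) ≤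
      ENNReal.ofReal (2 * Real.exp (-(2 * τ * D))) * ENNReal.ofReal (u (p + h) ^ 2) +
      ENNReal.ofReal (2 * ‖h‖ ^ 2 * Real.exp (2 * τ * M)) *
        ∫⁻ t in Set.Ioc (0 : ℝ) 1, ENNReal.ofReal (‖twistedDeriv τ V u (p + t • h)‖ ^ 2) := by
    intro p hp
    have hle := sq_le_of_descent hV hu hτ (hD p hp) (hM p hp)
    have hint : IntegrableOn (fun t : ℝ => ‖twistedDeriv τ V u (p + t • h)‖ ^ 2) (Set.Ioc 0 1) :=
      (Continuous.integrableOn_Icc (by fun_prop)).mono_set Set.Ioc_subset_Icc_self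
    have hint0 : 0 ≤ ∫ t in Set.Ioc (0 : ℝ) 1, ‖twistedDeriv τ V u (p + t • h)‖ ^ 2 :=
      integral_nonneg fun t => by positivity
    rw [intervalIntegral.integral_of_le zero_le_one] at hle
    rw [← ofReal_integral_eq_lintegral_ofReal hint (.of_forall fun t => by positivity),
      ← ENNReal.ofReal_mul (by positivity), ← ENNReal.ofReal_mul (by positivity),
      ← ENNReal.ofReal_add (by positivity) (by positivity)]
    exact ENNReal.ofReal_le_ofReal hle
  refine (setLIntegral_mono' measurableSet_closedBall hpointwise).trans ?_
  rw [lintegral_add_left (hφh.const_mul _),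
    lintegral_const_mul _ hφh,
    lintegral_const_mul _ hline.lintegral_prod_right']
  exact add_le_add
    (mul_le_mul_right (setLIntegral_closedBall_add_le (fun p => ENNReal.ofReal (u p ^ 2)) hr) _)
    (mul_le_mul_right (setLIntegral_closedBall_line_le hψ hr) _)

/- Since `z - x` moves the whole ball of radius `H⁻¹ / L` to points where `V` is lower by
`D - 2`, `e^{τV}` gains the factor `e^{-τ(D - 2)}` there. -/
theorem setLIntegral_sq_le_of_lower_point (hV : ContDiff ℝ 1 V) (hu : ContDiff ℝ 1 u) (hτ : 0 ≤ τ)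
    {x z : E} {L H R D : ℝ} (hL : 0 < L) (hH : 1 ≤ H) (hR : 1 ≤ R)
    (hgrad : ∀ y ∈ closedBall x (2 * R / L), ‖fderiv ℝ V y‖ ≤ H * L)
    (hz : z ∈ closedBall x (R / L)) (hVz : V z ≤ V x - D) :
    ∫⁻ p in closedBall x (H⁻¹ / L), ENNReal.ofReal (u p ^ 2) ∂μ ≤
      ENNReal.ofReal (2 * Real.exp (-(2 * τ * (D - 2)))) *
        ∫⁻ p in closedBall x (2 * R / L), ENNReal.ofReal (u p ^ 2) ∂μ +
      ENNReal.ofReal (2 * R ^ 2 * Real.exp (2 * τ * (H * R)) / L ^ 2) *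
        ∫⁻ p in closedBall x (2 * R / L), ENNReal.ofReal (‖twistedDeriv τ V u p‖ ^ 2) ∂μ := by
  have hzx : ‖z - x‖ ≤ R / L := mem_closedBall_iff_norm.1 hz
  have hHL : H⁻¹ / L ≤ R / L := by
    gcongr
    exact (inv_le_one_of_one_le₀ hH).trans hR
  have hsum : H⁻¹ / L + ‖z - x‖ ≤ 2 * R / L := by linarith [(by ring : 2 * R / L = R / L + R / L)]
  have hline {p : E} {t : ℝ} (hp : p ∈ closedBall x (H⁻¹ / L)) (ht : t ∈ Set.Icc (0 : ℝ) 1) :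
      p + t • (z - x) ∈ closedBall x (2 * R / L) := add_smul_mem_closedBall hsum hp ht
  have hlip {y w : E} (hy : y ∈ closedBall x (2 * R / L)) (hw : w ∈ closedBall x (2 * R / L)) :
      |V w - V y| ≤ H * L * dist w y :=
    norm_sub_le_of_norm_fderiv_le (hV.differentiable one_ne_zero) hgrad hy hw
  have hmem {p : E} (hp : p ∈ closedBall x (H⁻¹ / L)) : p ∈ closedBall x (2 * R / L) := by
    simpa using hline hp (t := 0) (by simp)
  have hx : x ∈ closedBall x (2 * R / L) := mem_closedBall_self (by positivity)
  have hz' : z ∈ closedBall x (2 * R / L) :=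
    closedBall_subset_closedBall (by gcongr; linarith) hz
  refine (setLIntegral_sq_le_of_descent (D := D - 2) (M := H * R) hV hu hτ hsum
    (fun p hp => ?_) fun p hp t ht => ?_).trans ?_
  · have hpx : H * L * dist p x ≤ 1 := by
      calc H * L * dist p x ≤ H * L * (H⁻¹ / L) := by gcongr; exact hp
        _ = 1 := by field_simp
    have hnear_x := (abs_le.1 (hlip hx (hmem hp))).1
    have hnear_z := (abs_le.1 (hlip hz' (by simpa using hline hp (t := 1) (by simp)))).2
    rw [dist_eq_norm, show p + (z - x) - z = p - x by abel, ← dist_eq_norm] at hnear_z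
    linarith
  · have hdist : H * L * dist (p + t • (z - x)) p ≤ H * R := by
      rw [dist_self_add_left, norm_smul, Real.norm_of_nonneg ht.1]
      calc H * L * (t * ‖z - x‖) ≤ H * L * (1 * (R / L)) := by gcongr; exact ht.2
        _ = H * R := by field_simp
    linarith [(abs_le.1 (hlip (hmem hp) (hline hp ht))).2]
  · gcongr
    calc 2 * ‖z - x‖ ^ 2 * Real.exp (2 * τ * (H * R))
        ≤ 2 * (R / L) ^ 2 * Real.exp (2 * τ * (H * R)) := by gcongr
      _ = 2 * R ^ 2 * Real.exp (2 * τ * (H * R)) / L ^ 2 := by ring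

end LocalMass

section Averaging

theorem lintegral_setLIntegral_swap {X Y : Type*} [MeasurableSpace X] [MeasurableSpace Y]
    {μ : Measure X} {ν : Measure Y} [SFinite μ] [SFinite ν] {S : Set (X × Y)}
    (hS : MeasurableSet S) {F : X → Y → ENNReal} (hF : Measurable (Function.uncurry F)) :
    ∫⁻ x, (∫⁻ y in {y | (x, y) ∈ S}, F x y ∂ν) ∂μ =
      ∫⁻ y, (∫⁻ x in {x | (x, y) ∈ S}, F x y ∂μ) ∂ν := by
  have hswap := lintegral_lintegral_swap (μ := μ) (ν := ν)
    (f := fun x y => S.indicator (Function.uncurry F) (x, y)) (hF.indicator hS).aemeasurable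
  have hx (x : X) : ∫⁻ y in {y | (x, y) ∈ S}, F x y ∂ν =
      ∫⁻ y, S.indicator (Function.uncurry F) (x, y) ∂ν :=
    (lintegral_indicator (measurable_prodMk_left hS) _).symm
  have hy (y : Y) : ∫⁻ x in {x | (x, y) ∈ S}, F x y ∂μ =
      ∫⁻ x, S.indicator (Function.uncurry F) (x, y) ∂μ :=
    (lintegral_indicator (measurable_prodMk_right hS) _).symm
  simpa only [hx, hy] using hswap

variable {E : Type*} [NormedAddCommGroup E] {f : E → ℝ} {Λ T H : ℝ}

/-- The weight `f` is comparable, up to the factor `H`, to its value at the centre of every ball of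
radius `T / f x` with `Λ ≤ f x`: there the metric `f ^ 2 * |dx| ^ 2` varies slowly. -/
def SlowlyVarying (f : E → ℝ) (Λ T H : ℝ) : Prop :=
  ∀ ⦃x⦄, Λ ≤ f x → ∀ ⦃y⦄, y ∈ closedBall x (T / f x) → f y ≤ H * f x ∧ f x ≤ H * f y

variable [MeasurableSpace E]

/-- The weight that a function on `E` collects at `y` when its integrals over the balls
`closedBall x (r / f x)` are averaged against `f x ^ m` with respect to `ν`. -/
def averageKernel (ν : Measure E) (f : E → ℝ) (r : ℝ) (m : ℕ) (y : E) : ENNReal :=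
  ∫⁻ x in {x | dist y x ≤ r / f x}, ENNReal.ofReal (f x ^ m) ∂ν

variable [BorelSpace E] [SecondCountableTopology E] {μ ν : Measure E} {φ ψ : E → ENNReal}

theorem measurableSet_dist_le_div (hf : Measurable f) (r : ℝ) :
    MeasurableSet {q : E × E | dist q.2 q.1 ≤ r / f q.1} :=
  measurableSet_le (by fun_prop) (measurable_const.div (hf.comp measurable_fst))

theorem measurable_setLIntegral_closedBall_div [SFinite μ] (hf : Measurable f) (r : ℝ)
    (hφ : Measurable φ) : Measurable fun x => ∫⁻ y in closedBall x (r / f x), φ y ∂μ := by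
  have hind := ((hφ.comp measurable_snd).indicator
    (measurableSet_dist_le_div hf r)).lintegral_prod_right' (ν := μ)
  convert hind using 2 with x
  exact (lintegral_indicator measurableSet_closedBall _).symm

theorem lintegral_mul_setLIntegral_closedBall_div [SFinite μ] [SFinite ν] (hf : Measurable f)
    (r : ℝ) (m : ℕ) (hφ : Measurable φ) :
    ∫⁻ x, ENNReal.ofReal (f x ^ m) * (∫⁻ y in closedBall x (r / f x), φ y ∂μ) ∂ν =
      ∫⁻ y, φ y * averageKernel ν f r m y ∂μ := by
  have hswap := lintegral_setLIntegral_swap (μ := ν) (ν := μ) (measurableSet_dist_le_div hf r)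
    (F := fun x y => ENNReal.ofReal (f x ^ m) * φ y) (by fun_prop)
  have hx (x : E) : ∫⁻ y in {y | dist y x ≤ r / f x}, ENNReal.ofReal (f x ^ m) * φ y ∂μ =
      ENNReal.ofReal (f x ^ m) * ∫⁻ y in closedBall x (r / f x), φ y ∂μ :=
    lintegral_const_mul _ hφ
  have hy (y : E) : ∫⁻ x in {x | dist y x ≤ r / f x}, ENNReal.ofReal (f x ^ m) * φ y ∂ν =
      φ y * averageKernel ν f r m y := by
    rw [lintegral_mul_const _ (by fun_prop), mul_comm]
    rfl
  simpa only [Set.mem_ofPred_eq, hx, hy] using hswap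

theorem averageKernel_restrict (hf : Measurable f) (S : Set E) (r : ℝ) (m : ℕ) (y : E) :
    averageKernel (μ.restrict S) f r m y =
      ∫⁻ x in {x | dist y x ≤ r / f x} ∩ S, ENNReal.ofReal (f x ^ m) ∂μ := by
  have hmeas : MeasurableSet {x | dist y x ≤ r / f x} :=
    measurable_prodMk_right (measurableSet_dist_le_div hf r)
  rw [averageKernel, Measure.restrict_restrict hmeas]

theorem lintegral_averageKernel_le_of_forall_le [SFinite μ] [SFinite ν] (hf : Measurable f)
    (hφ : Measurable φ) (hψ : Measurable ψ) {r κ B : ℝ} (hB : 0 ≤ B) (m : ℕ)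
    (hν : ∀ᵐ x ∂ν, 0 < f x ∧ ∫⁻ p in closedBall x (r / f x), φ p ∂μ ≤
      ENNReal.ofReal κ * ∫⁻ p in closedBall x (T / f x), φ p ∂μ +
        ENNReal.ofReal (B / f x ^ 2) * ∫⁻ p in closedBall x (T / f x), ψ p ∂μ) :
    ∫⁻ y, φ y * averageKernel ν f r (m + 2) y ∂μ ≤
      ENNReal.ofReal κ * ∫⁻ y, φ y * averageKernel ν f T (m + 2) y ∂μ +
        ENNReal.ofReal B * ∫⁻ y, ψ y * averageKernel ν f T m y ∂μ := by
  have hint := measurable_setLIntegral_closedBall_div (μ := μ) hf T hφ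
  have hint' := measurable_setLIntegral_closedBall_div (μ := μ) hf T hψ
  rw [← lintegral_mul_setLIntegral_closedBall_div hf _ _ hφ,
    ← lintegral_mul_setLIntegral_closedBall_div hf _ _ hφ,
    ← lintegral_mul_setLIntegral_closedBall_div hf _ _ hψ,
    ← lintegral_const_mul _ (by fun_prop), ← lintegral_const_mul _ (by fun_prop),
    ← lintegral_add_left (by fun_prop)]
  refine lintegral_mono_ae (hν.mono fun x hx => ?_)
  have hpow : ENNReal.ofReal (f x ^ (m + 2)) * ENNReal.ofReal (B / f x ^ 2) =
      ENNReal.ofReal B * ENNReal.ofReal (f x ^ m) := by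
    have hfx := hx.1
    rw [← ENNReal.ofReal_mul (by positivity), ← ENNReal.ofReal_mul hB, pow_add]
    congr 1
    field_simp
  calc ENNReal.ofReal (f x ^ (m + 2)) * ∫⁻ p in closedBall x (r / f x), φ p ∂μ
      ≤ ENNReal.ofReal (f x ^ (m + 2)) *
          (ENNReal.ofReal κ * ∫⁻ p in closedBall x (T / f x), φ p ∂μ +
            ENNReal.ofReal (B / f x ^ 2) * ∫⁻ p in closedBall x (T / f x), ψ p ∂μ) :=
        mul_le_mul_right hx.2 _
    _ = _ := by rw [mul_add, ← mul_assoc, ← mul_assoc, hpow]; ring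

variable [NormedSpace ℝ E] [FiniteDimensional ℝ E] [μ.IsAddHaarMeasure]

local notation "dim" => Module.finrank ℝ E

theorem SlowlyVarying.averageKernel_le (h : SlowlyVarying f Λ T H) (hΛ : 0 < Λ) (hT : 0 ≤ T)
    (hH : 0 < H) (hf : Measurable f) (j : ℕ) (y : E) :
    averageKernel (μ.restrict {x | Λ ≤ f x}) f T (dim + j) y ≤
      ENNReal.ofReal (H ^ (2 * dim + j) * T ^ dim * f y ^ j) * μ (ball 0 1) := by
  rw [averageKernel_restrict hf]
  set S := {x | dist y x ≤ T / f x} ∩ {x | Λ ≤ f x}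
  obtain hS | ⟨x₀, hx₀⟩ := S.eq_empty_or_nonempty
  · simp [hS]
  have hpos {x : E} (hx : x ∈ S) : 0 < f x := hΛ.trans_le hx.2
  have hfy : 0 < f y :=
    pos_of_mul_pos_right ((hpos hx₀).trans_le (h hx₀.2 hx₀.1).2) hH.le
  have hsub : S ⊆ closedBall y (T * H / f y) := by
    intro x hx
    rw [mem_closedBall, dist_comm]
    refine hx.1.trans ?_
    rw [div_le_div_iff₀ (hpos hx) hfy, mul_assoc]
    exact mul_le_mul_of_nonneg_left (h hx.2 hx.1).1 hT
  calc ∫⁻ x in S, ENNReal.ofReal (f x ^ (dim + j)) ∂μ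
      ≤ ∫⁻ _ in S, ENNReal.ofReal ((H * f y) ^ (dim + j)) ∂μ :=
        setLIntegral_mono measurable_const fun x hx => ENNReal.ofReal_le_ofReal
          (pow_le_pow_left₀ (hpos hx).le (h hx.2 hx.1).2 _)
    _ = ENNReal.ofReal ((H * f y) ^ (dim + j)) * μ S := by simp
    _ ≤ ENNReal.ofReal ((H * f y) ^ (dim + j)) * μ (closedBall y (T * H / f y)) := by gcongr
    _ = ENNReal.ofReal (H ^ (2 * dim + j) * T ^ dim * f y ^ j) * μ (ball 0 1) := by
        rw [Measure.addHaar_closedBall μ y (by positivity), ← mul_assoc,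
          ← ENNReal.ofReal_mul (by positivity)]
        congr 2
        simp only [mul_pow, div_pow, pow_add, pow_mul]
        field_simp
        ring

theorem SlowlyVarying.le_averageKernel (h : SlowlyVarying f Λ T H) (hΛ : 0 < Λ) (hT : 1 ≤ T)
    (hH : 1 ≤ H) (hf : Measurable f) (j : ℕ) {y : E} (hy : H * Λ ≤ f y) :
    ENNReal.ofReal (f y ^ j) * μ (ball 0 1) ≤ ENNReal.ofReal (H ^ (3 * dim + j)) *
      averageKernel (μ.restrict {x | Λ ≤ f x}) f H⁻¹ (dim + j) y := by
  have hH0 : 0 < H := one_pos.trans_le hH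
  have hΛy : Λ ≤ f y := (le_mul_of_one_le_left hΛ.le hH).trans hy
  have hfy : 0 < f y := hΛ.trans_le hΛy
  have hcmp {x : E} (hx : x ∈ closedBall y ((H ^ 2)⁻¹ / f y)) : f x ≤ H * f y ∧ f y ≤ H * f x := by
    refine h hΛy (closedBall_subset_closedBall ?_ hx)
    gcongr
    exact (inv_le_one_of_one_le₀ (one_le_pow₀ hH)).trans hT
  have hsub : closedBall y ((H ^ 2)⁻¹ / f y) ⊆ {x | dist y x ≤ H⁻¹ / f x} ∩ {x | Λ ≤ f x} := by
    intro x hx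
    have hΛx : Λ ≤ f x := le_of_mul_le_mul_left (hy.trans (hcmp hx).2) hH0
    refine ⟨?_, hΛx⟩
    have hfx : 0 < f x := hΛ.trans_le hΛx
    calc dist y x ≤ (H ^ 2)⁻¹ / f y := by rw [dist_comm]; exact hx
      _ = H⁻¹ / (H * f y) := by field_simp
      _ ≤ H⁻¹ / f x := by gcongr; exact (hcmp hx).1
  rw [averageKernel_restrict hf]
  calc ENNReal.ofReal (f y ^ j) * μ (ball 0 1)
      = ENNReal.ofReal (H ^ (3 * dim + j)) * (ENNReal.ofReal ((H⁻¹ * f y) ^ (dim + j)) *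
          μ (closedBall y ((H ^ 2)⁻¹ / f y))) := by
        rw [Measure.addHaar_closedBall μ y (by positivity), ← mul_assoc, ← mul_assoc,
          ← ENNReal.ofReal_mul (by positivity), ← ENNReal.ofReal_mul (by positivity)]
        congr 2
        simp only [mul_pow, div_pow, inv_pow, pow_add, pow_mul]
        field_simp
        ring
    _ = ENNReal.ofReal (H ^ (3 * dim + j)) *
          ∫⁻ _ in closedBall y ((H ^ 2)⁻¹ / f y), ENNReal.ofReal ((H⁻¹ * f y) ^ (dim + j)) ∂μ := by
        simp
    _ ≤ ENNReal.ofReal (H ^ (3 * dim + j)) *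
          ∫⁻ x in closedBall y ((H ^ 2)⁻¹ / f y), ENNReal.ofReal (f x ^ (dim + j)) ∂μ := by
        refine mul_le_mul_right (setLIntegral_mono' measurableSet_closedBall fun x hx => ?_) _
        gcongr
        exact (inv_mul_le_iff₀ hH0).2 (hcmp hx).2
    _ ≤ _ := mul_le_mul_right (lintegral_mono_set hsub) _

theorem SlowlyVarying.lintegral_averageKernel_le (h : SlowlyVarying f Λ T H) (hΛ : 0 < Λ)
    (hT : 0 ≤ T) (hH : 0 < H) (hf : Measurable f) (hφ : Measurable φ) (j : ℕ) :
    ∫⁻ y, φ y * averageKernel (μ.restrict {x | Λ ≤ f x}) f T (dim + j) y ∂μ ≤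
      ENNReal.ofReal (H ^ (2 * dim + j) * T ^ dim) * μ (ball 0 1) *
        ∫⁻ y, ENNReal.ofReal (f y ^ j) * φ y ∂μ := by
  rw [← lintegral_const_mul _ (by fun_prop)]
  refine lintegral_mono fun y =>
    (mul_le_mul_right (h.averageKernel_le hΛ hT hH hf j y) _).trans_eq ?_
  rw [ENNReal.ofReal_mul (by positivity)]
  ring

theorem SlowlyVarying.setLIntegral_le_averageKernel (h : SlowlyVarying f Λ T H) (hΛ : 0 < Λ)
    (hT : 1 ≤ T) (hH : 1 ≤ H) (hf : Measurable f) (hφ : Measurable φ) (j : ℕ) :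
    μ (ball 0 1) * ∫⁻ y in {y | H * Λ ≤ f y}, ENNReal.ofReal (f y ^ j) * φ y ∂μ ≤
      ENNReal.ofReal (H ^ (3 * dim + j)) *
        ∫⁻ y, φ y * averageKernel (μ.restrict {x | Λ ≤ f x}) f H⁻¹ (dim + j) y ∂μ := by
  rw [← lintegral_const_mul _ (by fun_prop), ← lintegral_const_mul' _ _ ENNReal.ofReal_ne_top]
  refine (setLIntegral_mono' (measurableSet_le measurable_const hf) fun y hy => ?_).trans
    (setLIntegral_le_lintegral {y | H * Λ ≤ f y} _)
  calc μ (ball 0 1) * (ENNReal.ofReal (f y ^ j) * φ y)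
      = φ y * (ENNReal.ofReal (f y ^ j) * μ (ball 0 1)) := by ring
    _ ≤ φ y * (ENNReal.ofReal (H ^ (3 * dim + j)) *
          averageKernel (μ.restrict {x | Λ ≤ f x}) f H⁻¹ (dim + j) y) :=
        mul_le_mul_right (h.le_averageKernel hΛ hT hH hf j hy) _
    _ = _ := by ring

theorem SlowlyVarying.setLIntegral_sq_le (h : SlowlyVarying f Λ T H) (hΛ : 0 < Λ) (hT : 1 ≤ T)
    (hH : 1 ≤ H) (hf : Measurable f) (hφ : Measurable φ) (hψ : Measurable ψ) {κ B : ℝ}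
    (hκ : 0 ≤ κ) (hB : 0 ≤ B)
    (hloc : ∀ x, Λ ≤ f x → ∫⁻ p in closedBall x (H⁻¹ / f x), φ p ∂μ ≤
      ENNReal.ofReal κ * ∫⁻ p in closedBall x (T / f x), φ p ∂μ +
        ENNReal.ofReal (B / f x ^ 2) * ∫⁻ p in closedBall x (T / f x), ψ p ∂μ) :
    ∫⁻ y in {y | H * Λ ≤ f y}, ENNReal.ofReal (f y ^ 2) * φ y ∂μ ≤
      ENNReal.ofReal (κ * (H ^ (5 * dim + 4) * T ^ dim)) *
          ∫⁻ y, ENNReal.ofReal (f y ^ 2) * φ y ∂μ +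
        ENNReal.ofReal (B * (H ^ (5 * dim + 2) * T ^ dim)) * ∫⁻ y, ψ y ∂μ := by
  have hH0 : 0 < H := one_pos.trans_le hH
  have hT0 : 0 ≤ T := zero_le_one.trans hT
  have hΛm : MeasurableSet {x | Λ ≤ f x} := measurableSet_le measurable_const hf
  have havg := lintegral_averageKernel_le_of_forall_le (μ := μ) (ν := μ.restrict {x | Λ ≤ f x})
    hf hφ hψ hB dim ((ae_restrict_iff' hΛm).2 (.of_forall fun x hx => ⟨hΛ.trans_le hx, hloc x hx⟩))
  have hlower := h.setLIntegral_le_averageKernel (μ := μ) hΛ hT hH hf hφ 2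
  have hupper := h.lintegral_averageKernel_le (μ := μ) hΛ hT0 hH0 hf hφ 2
  have hupper' := h.lintegral_averageKernel_le (μ := μ) hΛ hT0 hH0 hf hψ 0
  simp only [pow_zero, ENNReal.ofReal_one, one_mul, add_zero] at hupper'
  refine (ENNReal.mul_le_mul_iff_right (measure_ball_pos μ 0 one_pos).ne'
    (measure_ball_lt_top (μ := μ) (x := (0 : E)) (r := 1)).ne).1 (hlower.trans ?_)
  refine (mul_le_mul_right (havg.trans (add_le_add (mul_le_mul_right hupper _)
    (mul_le_mul_right hupper' _))) _).trans_eq ?_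
  rw [ENNReal.ofReal_mul hκ, ENNReal.ofReal_mul hB,
    show H ^ (5 * dim + 4) * T ^ dim = H ^ (3 * dim + 2) * (H ^ (2 * dim + 2) * T ^ dim) by ring,
    show H ^ (5 * dim + 2) * T ^ dim = H ^ (3 * dim + 2) * (H ^ (2 * dim) * T ^ dim) by ring,
    ENNReal.ofReal_mul (p := H ^ (3 * dim + 2)) (by positivity),
    ENNReal.ofReal_mul (p := H ^ (3 * dim + 2)) (by positivity)]
  ring

theorem SlowlyVarying.lintegral_sq_le (h : SlowlyVarying f Λ T H) (hΛ : 0 < Λ) (hT : 1 ≤ T)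
    (hH : 1 ≤ H) (hf : Measurable f) (hf0 : ∀ x, 0 ≤ f x) (hφ : Measurable φ) (hψ : Measurable ψ)
    {κ B : ℝ} (hκ : 0 ≤ κ) (hB : 0 ≤ B)
    (hloc : ∀ x, Λ ≤ f x → ∫⁻ p in closedBall x (H⁻¹ / f x), φ p ∂μ ≤
      ENNReal.ofReal κ * ∫⁻ p in closedBall x (T / f x), φ p ∂μ +
        ENNReal.ofReal (B / f x ^ 2) * ∫⁻ p in closedBall x (T / f x), ψ p ∂μ)
    (hsmall : κ * (H ^ (5 * dim + 4) * T ^ dim) ≤ 1 / 2)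
    (hfin : ∫⁻ y, ENNReal.ofReal (f y ^ 2) * φ y ∂μ ≠ ⊤) :
    ∫⁻ y, ENNReal.ofReal (f y ^ 2) * φ y ∂μ ≤
      2 * (ENNReal.ofReal (B * (H ^ (5 * dim + 2) * T ^ dim)) * ∫⁻ y, ψ y ∂μ +
        ENNReal.ofReal ((H * Λ) ^ 2) * ∫⁻ y, φ y ∂μ) := by
  set X := ∫⁻ y, ENNReal.ofReal (f y ^ 2) * φ y ∂μ
  set Z := ENNReal.ofReal (B * (H ^ (5 * dim + 2) * T ^ dim)) * ∫⁻ y, ψ y ∂μ +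
    ENNReal.ofReal ((H * Λ) ^ 2) * ∫⁻ y, φ y ∂μ with hZ
  have hmeas : MeasurableSet {y | H * Λ ≤ f y} := measurableSet_le measurable_const hf
  have hhigh := h.setLIntegral_sq_le (μ := μ) hΛ hT hH hf hφ hψ hκ hB hloc
  have hlow : ∫⁻ y in {y | H * Λ ≤ f y}ᶜ, ENNReal.ofReal (f y ^ 2) * φ y ∂μ ≤
      ENNReal.ofReal ((H * Λ) ^ 2) * ∫⁻ y, φ y ∂μ := by
    rw [← lintegral_const_mul _ hφ]
    refine (setLIntegral_mono' hmeas.compl fun y hy => ?_).trans (setLIntegral_le_lintegral _ _)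
    have hfy : f y ≤ H * Λ := le_of_not_ge fun hge => hy hge
    have := hf0 y
    gcongr
  have habsorb : X ≤ X / 2 + Z := by
    calc X = _ := (lintegral_add_compl _ hmeas).symm
      _ ≤ _ := add_le_add hhigh hlow
      _ ≤ ENNReal.ofReal (1 / 2) * X + Z := by
        rw [hZ, ← add_assoc]
        gcongr
      _ = X / 2 + Z := by
        rw [ENNReal.ofReal_div_of_pos two_pos, ENNReal.ofReal_one, ENNReal.ofReal_ofNat,
          ENNReal.div_eq_inv_mul, mul_one, ← ENNReal.div_eq_inv_mul]
  have hhalf : X / 2 ≤ Z := by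
    rw [← ENNReal.add_le_add_iff_left (ENNReal.div_ne_top hfin two_ne_zero), ENNReal.add_halves]
    exact habsorb
  calc X = 2 * (X / 2) := (ENNReal.mul_div_cancel two_ne_zero ENNReal.ofNat_ne_top).symm
    _ ≤ 2 * Z := by gcongr

end Averaging

section GlobalEstimate

theorem exists_nat_mul_pow_mul_exp_neg_le (C : ℝ) {b ε : ℝ} (hb : 0 < b) (hε : 0 < ε) (N : ℕ) :
    ∃ J : ℕ, 1 ≤ J ∧ C * (J : ℝ) ^ N * Real.exp (-(b * J)) ≤ ε := by
  have hlim := ((Real.tendsto_pow_mul_exp_neg_atTop_nhds_zero N).comp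
    (tendsto_natCast_atTop_atTop.const_mul_atTop hb)).const_mul (C * (b ^ N)⁻¹)
  rw [mul_zero] at hlim
  obtain ⟨J, hJ, hJ1⟩ :=
    ((hlim.eventually (eventually_le_nhds hε)).and (eventually_ge_atTop 1)).exists
  refine ⟨J, hJ1, le_trans (le_of_eq ?_) hJ⟩
  simp only [Function.comp, mul_pow]
  field_simp

/-- The factor up to which the jet weight `Φ` of order `k` is constant on the ball of radius
`T / Φ x` around `x`. -/
def jetComparison (k : ℕ) (T : ℝ) : ℝ := ((k : ℝ) + 1) ^ 2 * T ^ k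

theorem one_le_jetComparison (k : ℕ) {T : ℝ} (hT : 1 ≤ T) : 1 ≤ jetComparison k T :=
  one_le_mul_of_one_le_of_one_le (one_le_pow₀ (by simp)) (one_le_pow₀ hT)

/- The gain `e^{-2τcJ}` of a descent chain of length `J` beats every power of the comparability
constant on the balls it crosses, which is polynomial in `J`. -/
theorem exists_descent_length (k M N : ℕ) {c τ : ℝ} (hc : 0 < c) (hτ : 0 < τ) :
    ∃ J : ℕ, 1 ≤ J ∧ 2 * Real.exp (-(2 * τ * (c * J - 2))) *
      (jetComparison k (2 * chainRadius k J) ^ M * (2 * chainRadius k J) ^ N) ≤ 1 / 2 := by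
  set A : ℝ := 2 * (3 * ((k : ℝ) + 1) ^ 2) ^ k
  obtain ⟨J, hJ, hsmall⟩ := exists_nat_mul_pow_mul_exp_neg_le
    (2 * Real.exp (4 * τ) * ((((k : ℝ) + 1) ^ 2) ^ M * A ^ (k * M + N)))
    (by positivity : 0 < 2 * τ * c) one_half_pos (k * (k * M + N))
  refine ⟨J, hJ, le_trans (le_of_eq ?_) hsmall⟩
  have hradius : 2 * chainRadius k J = A * (J : ℝ) ^ k := by
    rw [chainRadius, mul_pow _ (J : ℝ), ← mul_assoc]
  have hexp : Real.exp (-(2 * τ * (c * J - 2))) =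
      Real.exp (4 * τ) * Real.exp (-(2 * τ * c * J)) := by
    rw [← Real.exp_add]
    ring_nf
  rw [hexp, hradius, jetComparison]
  generalize ((k : ℝ) + 1) ^ 2 = K
  ring

theorem integral_le_of_lintegral_ofReal_le {X : Type*} [MeasurableSpace X] {μ : Measure X}
    {f g h : X → ℝ} {a b : ℝ} (ha : 0 ≤ a) (hb : 0 ≤ b)
    (hf : Integrable f μ) (hg : Integrable g μ) (hh : Integrable h μ)
    (hf0 : 0 ≤ f) (hg0 : 0 ≤ g) (hh0 : 0 ≤ h)
    (hle : ∫⁻ x, ENNReal.ofReal (f x) ∂μ ≤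
      2 * (ENNReal.ofReal a * ∫⁻ x, ENNReal.ofReal (g x) ∂μ +
        ENNReal.ofReal b * ∫⁻ x, ENNReal.ofReal (h x) ∂μ)) :
    ∫ x, f x ∂μ ≤ 2 * (a * ∫ x, g x ∂μ + b * ∫ x, h x ∂μ) := by
  have hg0' : 0 ≤ ∫ x, g x ∂μ := integral_nonneg hg0
  have hh0' : 0 ≤ ∫ x, h x ∂μ := integral_nonneg hh0
  rw [← ofReal_integral_eq_lintegral_ofReal hf (.of_forall hf0),
    ← ofReal_integral_eq_lintegral_ofReal hg (.of_forall hg0),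
    ← ofReal_integral_eq_lintegral_ofReal hh (.of_forall hh0), ← ENNReal.ofReal_mul ha,
    ← ENNReal.ofReal_mul hb, ← ENNReal.ofReal_add (by positivity) (by positivity),
    ← ENNReal.ofReal_ofNat, ← ENNReal.ofReal_mul zero_le_two] at hle
  exact (ENNReal.ofReal_le_ofReal_iff (by positivity)).1 hle

variable {E : Type*} [NormedAddCommGroup E] [InnerProductSpace ℝ E] {V : E → ℝ} {k : ℕ}

theorem JetTame.exists_slowlyVarying (ht : JetTame k V) (hV : ContDiff ℝ (k + 1) V) {T : ℝ}
    (hT : 1 ≤ T) {p : E → Prop} (hp : ∀ᶠ x in comap (jetWeight k V) atTop, p x) :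
    ∃ Λ > 0, SlowlyVarying (jetWeight k V) Λ T (jetComparison k T) ∧
      ∀ x, Λ ≤ jetWeight k V x → p x := by
  obtain ⟨Λ, -, hΛ⟩ := ((atTop_basis' (1 : ℝ)).comap _).eventually_iff.1
    ((ht.eventually_comparable hV hT).and hp)
  exact ⟨max Λ 1, by positivity,
    fun x hx y hy => (hΛ ((le_max_left _ _).trans hx)).1 y hy,
    fun x hx => (hΛ ((le_max_left _ _).trans hx)).2⟩

variable [FiniteDimensional ℝ E] [MeasurableSpace E] [BorelSpace E] {μ : Measure E}
  [μ.IsAddHaarMeasure] {τ : ℝ}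

theorem SlowlyVarying.integral_sq_mul_le {f U G : E → ℝ} {Λ T H κ B : ℝ}
    (h : SlowlyVarying f Λ T H) (hΛ : 0 < Λ) (hT : 1 ≤ T) (hH : 1 ≤ H) (hf : Continuous f)
    (hf0 : ∀ x, 0 ≤ f x) (hU : Continuous U) (hG : Continuous G) (hUs : HasCompactSupport U)
    (hGs : HasCompactSupport G) (hU0 : 0 ≤ U) (hG0 : 0 ≤ G) (hκ : 0 ≤ κ) (hB : 0 ≤ B)
    (hloc : ∀ x, Λ ≤ f x → ∫⁻ p in closedBall x (H⁻¹ / f x), ENNReal.ofReal (U p) ∂μ ≤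
      ENNReal.ofReal κ * ∫⁻ p in closedBall x (T / f x), ENNReal.ofReal (U p) ∂μ +
        ENNReal.ofReal (B / f x ^ 2) * ∫⁻ p in closedBall x (T / f x), ENNReal.ofReal (G p) ∂μ)
    (hsmall : κ * (H ^ (5 * Module.finrank ℝ E + 4) * T ^ Module.finrank ℝ E) ≤ 1 / 2) :
    ∫ x, f x ^ 2 * U x ∂μ ≤
      2 * (B * (H ^ (5 * Module.finrank ℝ E + 2) * T ^ Module.finrank ℝ E) * ∫ x, G x ∂μ +
        (H * Λ) ^ 2 * ∫ x, U x ∂μ) := by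
  have hU_int : Integrable U μ := hU.integrable_of_hasCompactSupport hUs
  have hG_int : Integrable G μ := hG.integrable_of_hasCompactSupport hGs
  have hfU_int : Integrable (fun x => f x ^ 2 * U x) μ :=
    ((hf.pow 2).mul hU).integrable_of_hasCompactSupport hUs.mul_left
  have hle := h.lintegral_sq_le (μ := μ) hΛ hT hH hf.measurable hf0 hU.measurable.ennreal_ofReal
    hG.measurable.ennreal_ofReal hκ hB hloc hsmall
  simp only [← ENNReal.ofReal_mul (sq_nonneg (f _))] at hle
  exact integral_le_of_lintegral_ofReal_le (by positivity) (by positivity) hfU_int hG_int hU_int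
    (fun x => mul_nonneg (sq_nonneg _) (hU0 x)) hG0 hU0 (hle hfU_int.lintegral_lt_top.ne)

theorem exists_eventually_setLIntegral_sq_le (hk : 1 ≤ k) (hV : ContDiff ℝ (k + 1) V)
    (ht : JetTame k V) (hp : HessianPinched k V) :
    ∃ c > 0, ∀ J : ℕ, 1 ≤ J → ∀ᶠ x in comap (jetWeight k V) atTop,
        letI R := chainRadius k J
        letI H := jetComparison k (2 * R)
        ∀ τ : ℝ, 0 ≤ τ → ∀ u : E → ℝ, ContDiff ℝ 1 u →
          ∫⁻ p in closedBall x (H⁻¹ / jetWeight k V x), ENNReal.ofReal (u p ^ 2) ∂μ ≤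
            ENNReal.ofReal (2 * Real.exp (-(2 * τ * (c * J - 2)))) *
                ∫⁻ p in closedBall x (2 * R / jetWeight k V x), ENNReal.ofReal (u p ^ 2) ∂μ +
              ENNReal.ofReal (2 * R ^ 2 * Real.exp (2 * τ * (H * R)) / jetWeight k V x ^ 2) *
                ∫⁻ p in closedBall x (2 * R / jetWeight k V x),
                  ENNReal.ofReal (‖twistedDeriv τ V u p‖ ^ 2) ∂μ := by
  obtain ⟨c, hc, hchain⟩ := exists_descent_chain hk hV ht hp
  refine ⟨c, hc, fun J hJ => ?_⟩
  have hR1 := one_le_chainRadius k hJ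
  have hT1 : 1 ≤ 2 * chainRadius k J := by linarith
  filter_upwards [hchain J hJ, ht.eventually_norm_fderiv_le hV hT1,
    tendsto_comap.eventually (eventually_gt_atTop (0 : ℝ))] with x ⟨z, hz, hVz⟩ hgrad hpos τ hτ u hu
  refine setLIntegral_sq_le_of_lower_point (hV.of_le (by exact_mod_cast Nat.le_add_left 1 k)) hu hτ
    hpos (one_le_jetComparison k hT1) hR1 (fun y hy => (hgrad y hy).trans ?_) hz hVz
  unfold jetComparison
  gcongr
  exact le_self_pow₀ (by simp) two_ne_zero

theorem exists_integral_jetWeight_sq_le (hk : 1 ≤ k) (hV : ContDiff ℝ (k + 1) V)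
    (ht : JetTame k V) (hp : HessianPinched k V) (hτ : 0 < τ) :
    ∃ D > 0, ∀ u : E → ℝ, ContDiff ℝ 1 u → HasCompactSupport u →
      ∫ x, jetWeight k V x ^ 2 * u x ^ 2 ∂μ ≤
        D * ∫ x, ‖twistedDeriv τ V u x‖ ^ 2 ∂μ + D * ∫ x, u x ^ 2 ∂μ := by
  obtain ⟨c, hc, hloc⟩ := exists_eventually_setLIntegral_sq_le (μ := μ) hk hV ht hp
  set n := Module.finrank ℝ E
  obtain ⟨J, hJ, hsmall⟩ := exists_descent_length k (5 * n + 4) n hc hτ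
  replace hloc := hloc J hJ
  set R := chainRadius k J
  set T := 2 * R
  set H := jetComparison k T
  have hT1 : 1 ≤ T := by linarith [one_le_chainRadius k hJ]
  have hH1 : 1 ≤ H := one_le_jetComparison k hT1
  obtain ⟨Λ, hΛ, hslow, hloc⟩ := ht.exists_slowlyVarying hV hT1 hloc
  set B : ℝ := 2 * R ^ 2 * Real.exp (2 * τ * (H * R))
  refine ⟨2 * (B * (H ^ (5 * n + 2) * T ^ n)) + 2 * (H * Λ) ^ 2, by positivity,
    fun u hu hsupp => ?_⟩
  have hΦ := continuous_jetWeight (hV.of_le (by exact_mod_cast k.le_succ))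
  have hG := continuous_twistedDeriv (τ := τ) (hV.of_le (by exact_mod_cast Nat.le_add_left 1 k)) hu
  have hest := hslow.integral_sq_mul_le (μ := μ) (U := fun x => u x ^ 2)
    (G := fun x => ‖twistedDeriv τ V u x‖ ^ 2) hΛ hT1 hH1 hΦ (jetWeight_nonneg k V)
    (hu.continuous.pow 2) (hG.norm.pow 2) (hsupp.comp_left (g := fun t : ℝ => t ^ 2) (by simp))
    ((hasCompactSupport_twistedDeriv hsupp).comp_left (g := fun L => ‖L‖ ^ 2) (by simp))
    (fun x => by positivity) (fun x => by positivity) (by positivity) (by positivity : 0 ≤ B)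
    (fun x hx => hloc x hx τ hτ.le u hu) hsmall
  have hG0 : 0 ≤ ∫ x, ‖twistedDeriv τ V u x‖ ^ 2 ∂μ := integral_nonneg fun x => by positivity
  have hu0 : 0 ≤ ∫ x, u x ^ 2 ∂μ := integral_nonneg fun x => by positivity
  calc _ ≤ _ := hest
    _ ≤ _ := by
      nlinarith [mul_nonneg (sq_nonneg (H * Λ)) hG0,
        mul_nonneg (by positivity : 0 ≤ B * (H ^ (5 * n + 2) * T ^ n)) hu0]

end GlobalEstimate

section SecondDerivative

variable {E : Type*} [NormedAddCommGroup E] [NormedSpace ℝ E] {f : E → ℝ}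

theorem fderiv_fderiv_apply_const {x : E} (hf : ContDiffAt ℝ 2 f x) (v w : E) :
    fderiv ℝ (fun y => fderiv ℝ f y w) x v = fderiv ℝ (fderiv ℝ f) x v w := by
  have hd : DifferentiableAt ℝ (fderiv ℝ f) x :=
    (hf.fderiv_right (m := 1) (by norm_num)).differentiableAt one_ne_zero
  rw [fderiv_clm_apply hd (differentiableAt_const w)]
  simp

theorem fderiv_fderiv_comm {x : E} (hf : ContDiffAt ℝ 2 f x) (v w : E) :
    fderiv ℝ (fderiv ℝ f) x v w = fderiv ℝ (fderiv ℝ f) x w v :=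
  hf.isSymmSndFDerivAt (by simp) v w

end SecondDerivative

section OrthonormalBasis

theorem norm_le_sum_norm_apply_orthonormalBasis {E F ι : Type*} [NormedAddCommGroup E]
    [InnerProductSpace ℝ E] [NormedAddCommGroup F] [NormedSpace ℝ F] [Fintype ι] {m : ℕ}
    (b : OrthonormalBasis ι ℝ E) (A : ContinuousMultilinearMap ℝ (fun _ : Fin m => E) F) :
    ‖A‖ ≤ ∑ v : Fin m → ι, ‖A fun j => b (v j)‖ := by
  classical
  refine A.opNorm_le_bound (Finset.sum_nonneg fun _ _ => norm_nonneg _) fun w => ?_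
  have hexpand : A w = ∑ v : Fin m → ι, (∏ j, b.repr (w j) (v j)) • A fun j => b (v j) := by
    conv_lhs => rw [← funext fun j => b.sum_repr (w j)]
    simp only [ContinuousMultilinearMap.map_sum, ContinuousMultilinearMap.map_smul_univ]
  rw [hexpand, Finset.sum_mul]
  refine (norm_sum_le _ _).trans (Finset.sum_le_sum fun v _ => ?_)
  rw [norm_smul, mul_comm, norm_prod]
  gcongr with j
  rw [← b.repr.norm_map]
  exact PiLp.norm_apply_le _ _

end OrthonormalBasis

section PartialDerivatives

variable {n : ℕ} {f : En n → ℝ}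

/-- The iterated partial derivative `∂_{l₁} ∂_{l₂} ⋯ f` along a list `l` of coordinates. -/
def pdList (l : List (Fin n)) (f : En n → ℝ) : En n → ℝ :=
  ((l.map (pd1 n)).prod : Function.End (En n → ℝ)) f

theorem pdList_cons (i : Fin n) (l : List (Fin n)) (f : En n → ℝ) :
    pdList (i :: l) f = pd1 n i (pdList l f) :=
  congrArg (fun T : Function.End (En n → ℝ) => T f) List.prod_cons

theorem contDiff_pdList {r : ℕ} (l : List (Fin n)) (hf : ContDiff ℝ (r + l.length : ℕ) f) :
    ContDiff ℝ r (pdList l f) := by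
  induction l generalizing r with
  | nil => exact hf
  | cons i l ih =>
    have hl : ContDiff ℝ (r + 1 : ℕ) (pdList l f) :=
      ih (by rwa [List.length_cons, ← add_assoc, add_right_comm] at hf)
    rw [pdList_cons]
    exact (hl.fderiv_right (by norm_cast)).clm_apply contDiff_const

theorem pd1_pd1 {x : En n} (hf : ContDiffAt ℝ 2 f x) (i j : Fin n) :
    pd1 n i (pd1 n j f) x =
      fderiv ℝ (fderiv ℝ f) x (EuclideanSpace.single i 1) (EuclideanSpace.single j 1) :=
  fderiv_fderiv_apply_const hf _ _

theorem pdList_perm {l l' : List (Fin n)} (hl : l.Perm l') (hf : ContDiff ℝ l.length f) :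
    pdList l f = pdList l' f := by
  induction hl with
  | nil => rfl
  | cons i _ ih =>
    rw [pdList_cons, pdList_cons, ih (hf.of_le (by exact_mod_cast Nat.le_succ _))]
  | swap i j l =>
    have hl : ContDiff ℝ 2 (pdList l f) := contDiff_pdList (r := 2) l (by
      rwa [add_comm])
    funext x
    simp only [pdList_cons]
    rw [pd1_pd1 hl.contDiffAt, pd1_pd1 hl.contDiffAt, fderiv_fderiv_comm hl.contDiffAt]
  | trans hl _ ih ih' => rw [ih hf, ih' (hl.length_eq ▸ hf)]

theorem pdList_ofFn {m : ℕ} (v : Fin m → Fin n) (hf : ContDiff ℝ m f) (x : En n) :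
    pdList (List.ofFn v) f x =
      iteratedFDeriv ℝ m f x fun j => EuclideanSpace.single (v j) 1 := by
  induction m generalizing x with
  | zero => rw [List.ofFn_zero, iteratedFDeriv_zero_apply]; rfl
  | succ m ih =>
    have hd : DifferentiableAt ℝ (iteratedFDeriv ℝ m f) x :=
      hf.differentiable_iteratedFDeriv (by exact_mod_cast m.lt_succ_self) x
    rw [List.ofFn_succ, pdList_cons, funext fun y => ih (fun j => v j.succ)
      (hf.of_le (by exact_mod_cast m.le_succ)) y, iteratedFDeriv_succ_apply_left, pd1,
      fderiv_continuousMultilinear_apply_const_apply hd]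
    rfl

/-- The multi-index `α` written as a word: `α i` letters `i`, in increasing order of `i`. -/
def multiIndexWord (α : Fin n → ℕ) : List (Fin n) :=
  (List.ofFn fun i => List.replicate (α i) i).flatten

theorem pdm_eq_pdList (α : Fin n → ℕ) (f : En n → ℝ) :
    pdm n α f = pdList (multiIndexWord α) f := by
  have hblock : (fun i => pd1 n i ^ α i) =
      List.prod ∘ (fun l => l.map (pd1 n)) ∘ fun i => List.replicate (α i) i := by
    funext i
    simp only [Function.comp_apply, List.map_replicate, List.prod_replicate]
  rw [pdm, pdList, multiIndexWord, List.map_flatten, List.prod_flatten, List.map_ofFn,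
    List.map_ofFn, hblock]

theorem length_multiIndexWord (α : Fin n → ℕ) : (multiIndexWord α).length = mdeg α := by
  simp [multiIndexWord, mdeg, List.length_flatten, List.map_ofFn, List.sum_ofFn]

theorem count_multiIndexWord (α : Fin n → ℕ) (i : Fin n) : (multiIndexWord α).count i = α i := by
  rw [multiIndexWord, List.count_flatten, List.map_ofFn, List.sum_ofFn]
  simp [List.count_replicate]

theorem abs_pdm_le (α : Fin n → ℕ) (hf : ContDiff ℝ (mdeg α) f) (x : En n) :
    |pdm n α f x| ≤ ‖iteratedFDeriv ℝ (mdeg α) f x‖ := by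
  rw [← length_multiIndexWord] at hf ⊢
  have hword := pdList_ofFn (multiIndexWord α).get hf x
  rw [List.ofFn_get] at hword
  rw [pdm_eq_pdList, hword, ← Real.norm_eq_abs]
  exact (ContinuousMultilinearMap.le_opNorm _ _).trans_eq (by simp)

/-- The multi-index counting the occurrences of each coordinate in the word `v`. -/
def wordMultiIndex {m : ℕ} (v : Fin m → Fin n) : Fin n → ℕ := fun i => (List.ofFn v).count i

theorem perm_multiIndexWord {m : ℕ} (v : Fin m → Fin n) :
    (List.ofFn v).Perm (multiIndexWord (wordMultiIndex v)) :=
  List.perm_iff_count.2 fun i => (count_multiIndexWord (wordMultiIndex v) i).symm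

theorem mdeg_wordMultiIndex {m : ℕ} (v : Fin m → Fin n) : mdeg (wordMultiIndex v) = m := by
  rw [← length_multiIndexWord, ← (perm_multiIndexWord v).length_eq, List.length_ofFn]

theorem norm_iteratedFDeriv_le_sum_abs_pdm {m : ℕ} (hf : ContDiff ℝ m f) (x : En n) :
    ‖iteratedFDeriv ℝ m f x‖ ≤ ∑ v : Fin m → Fin n, |pdm n (wordMultiIndex v) f x| := by
  refine (norm_le_sum_norm_apply_orthonormalBasis (EuclideanSpace.basisFun (Fin n) ℝ) _).trans_eq
    (Finset.sum_congr rfl fun v _ => ?_)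
  simp only [EuclideanSpace.basisFun_apply]
  rw [pdm_eq_pdList, ← pdList_perm (perm_multiIndexWord v) (by simpa using hf), pdList_ofFn v hf,
    Real.norm_eq_abs]

end PartialDerivatives

section HermitianMatrix

variable {ι : Type*} [Fintype ι] [DecidableEq ι] {A : Matrix ι ι ℝ}

theorem inner_toLp_mulVec_eigenvectorBasis (hA : A.IsHermitian) (i : ι) (v : EuclideanSpace ℝ ι) :
    inner ℝ v (WithLp.toLp 2 (A.mulVec (hA.eigenvectorBasis i).ofLp)) =
      hA.eigenvalues i * inner ℝ v (hA.eigenvectorBasis i) := by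
  rw [hA.mulVec_eigenvectorBasis, WithLp.toLp_smul, inner_smul_right]

theorem inner_toLp_mulVec_eq_sum_eigenvalues (hA : A.IsHermitian) (v : EuclideanSpace ℝ ι) :
    inner ℝ v (WithLp.toLp 2 (A.mulVec v.ofLp)) =
      ∑ i, hA.eigenvalues i * inner ℝ v (hA.eigenvectorBasis i) ^ 2 := by
  set e := hA.eigenvectorBasis
  have hexpand : WithLp.toLp 2 (A.mulVec v.ofLp) =
      ∑ i, inner ℝ (e i) v • WithLp.toLp 2 (A.mulVec (e i).ofLp) := by
    conv_lhs => rw [← e.sum_repr' v]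
    simp only [WithLp.ofLp_sum, WithLp.ofLp_smul, Matrix.mulVec_sum, Matrix.mulVec_smul,
      WithLp.toLp_sum, WithLp.toLp_smul]
  rw [hexpand, inner_sum]
  refine Finset.sum_congr rfl fun i _ => ?_
  rw [inner_smul_right, inner_toLp_mulVec_eigenvectorBasis, real_inner_comm]
  ring

theorem inner_toLp_mulVec_le_sum_max_eigenvalues (hA : A.IsHermitian) {v : EuclideanSpace ℝ ι}
    (hv : ‖v‖ = 1) :
    inner ℝ v (WithLp.toLp 2 (A.mulVec v.ofLp)) ≤ ∑ i, max (hA.eigenvalues i) 0 := by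
  rw [inner_toLp_mulVec_eq_sum_eigenvalues hA]
  refine Finset.sum_le_sum fun i _ => ?_
  have hcs : inner ℝ v (hA.eigenvectorBasis i) ^ 2 ≤ 1 := by
    rw [sq_le_one_iff_abs_le_one]
    simpa [hv] using abs_real_inner_le_norm v (hA.eigenvectorBasis i)
  calc hA.eigenvalues i * inner ℝ v (hA.eigenvectorBasis i) ^ 2
      ≤ max (hA.eigenvalues i) 0 * inner ℝ v (hA.eigenvectorBasis i) ^ 2 := by
        gcongr
        exact le_max_left _ _
    _ ≤ max (hA.eigenvalues i) 0 := mul_le_of_le_one_right (le_max_right _ _) hcs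

theorem neg_eigenvalues_le_of_forall_le_inner (hA : A.IsHermitian) {b : ℝ}
    (h : ∀ v : EuclideanSpace ℝ ι, -b * ‖v‖ ^ 2 ≤ inner ℝ v (WithLp.toLp 2 (A.mulVec v.ofLp)))
    (i : ι) : -hA.eigenvalues i ≤ b := by
  have hi := h (hA.eigenvectorBasis i)
  rw [inner_toLp_mulVec_eigenvectorBasis, real_inner_self_eq_norm_sq,
    hA.eigenvectorBasis.norm_eq_one] at hi
  linarith

end HermitianMatrix

section Hessian

variable {n : ℕ} {V : En n → ℝ} {x : En n}

theorem isHermitian_hessM (hV : ContDiffAt ℝ 2 V x) : (hessM n V x).IsHermitian :=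
  Matrix.IsHermitian.ext fun i j => by
    rw [star_trivial, hessM, hessM, pd1_pd1 hV, pd1_pd1 hV, fderiv_fderiv_comm hV]

theorem fderiv_fderiv_eq_inner_hessM (hV : ContDiffAt ℝ 2 V x) (v w : En n) :
    fderiv ℝ (fderiv ℝ V) x v w =
      inner ℝ v (WithLp.toLp 2 ((hessM n V x).mulVec w.ofLp)) := by
  have hbasis (v : En n) : v = ∑ i, v i • EuclideanSpace.single i (1 : ℝ) := by
    simpa using ((EuclideanSpace.basisFun (Fin n) ℝ).sum_repr v).symm
  conv_lhs => rw [hbasis v, hbasis w]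
  simp only [map_sum, map_smul, sum_apply, smul_apply, smul_eq_mul, PiLp.inner_apply,
    Matrix.mulVec, dotProduct, hessM, pd1_pd1 hV, RCLike.inner_apply, conj_trivial,
    Finset.mul_sum, Finset.sum_mul]
  rw [Finset.sum_comm]
  exact Finset.sum_congr rfl fun i _ => Finset.sum_congr rfl fun j _ => by ring

theorem hessEig_eq_eigenvalues (hV : ContDiffAt ℝ 2 V x) :
    hessEig n V x = (isHermitian_hessM hV).eigenvalues :=
  dif_pos (isHermitian_hessM hV)

theorem fderiv_fderiv_le_lamPos (hV : ContDiffAt ℝ 2 V x) {v : En n} (hv : ‖v‖ = 1) :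
    fderiv ℝ (fderiv ℝ V) x v v ≤ lamPos n V x := by
  rw [fderiv_fderiv_eq_inner_hessM hV, lamPos, hessEig_eq_eigenvalues hV]
  exact inner_toLp_mulVec_le_sum_max_eigenvalues _ hv

theorem lamNeg_le_mul (hV : ContDiffAt ℝ 2 V x) {b : ℝ} (hb : 0 ≤ b)
    (h : ∀ w, -b * ‖w‖ ^ 2 ≤ fderiv ℝ (fderiv ℝ V) x w w) : lamNeg n V x ≤ n * b := by
  simp only [fderiv_fderiv_eq_inner_hessM hV] at h
  rw [lamNeg, hessEig_eq_eigenvalues hV]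
  calc ∑ i, max (-(isHermitian_hessM hV).eigenvalues i) 0
      ≤ ∑ _i : Fin n, b := Finset.sum_le_sum fun i _ =>
        max_le (neg_eigenvalues_le_of_forall_le_inner _ h i) hb
    _ = n * b := by simp

end Hessian

section CoordinateWeights

variable {n k : ℕ} {V : En n → ℝ}

theorem mem_midx {lo : ℕ} {α : Fin n → ℕ} : α ∈ midx n k lo ↔ lo ≤ mdeg α ∧ mdeg α ≤ k := by
  simp only [midx, Finset.mem_filter, Finset.mem_Iic, and_iff_right_iff_imp]
  exact fun h i =>
    (Finset.single_le_sum (f := α) (fun _ _ => Nat.zero_le _) (Finset.mem_univ i)).trans h.2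

theorem abs_pdm_rpow_le_jetWeight_rpow (hV : ContDiff ℝ k V) {α : Fin n → ℕ} (hα : 1 ≤ mdeg α)
    (hαk : mdeg α ≤ k) {s : ℝ} (hs : 0 ≤ s) (x : En n) :
    |pdm n α V x| ^ (s / mdeg α) ≤ jetWeight k V x ^ s := by
  have hα0 : (mdeg α : ℝ) ≠ 0 := by positivity
  calc |pdm n α V x| ^ (s / mdeg α) ≤ (jetWeight k V x ^ mdeg α) ^ (s / mdeg α) := by
        gcongr
        exact (abs_pdm_le α (hV.of_le (by exact_mod_cast hαk)) x).trans
          (norm_iteratedFDeriv_le_jetWeight_pow hα hαk x)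
    _ = jetWeight k V x ^ s := by
        rw [← Real.rpow_natCast_mul (jetWeight_nonneg k V x), mul_div_cancel₀ s hα0]

theorem ftilTau_nonneg {τ : ℝ} (hτ : 0 ≤ τ) (x : En n) : 0 ≤ ftilTau n k V τ x :=
  Finset.sum_nonneg fun _ _ => by positivity

theorem ftilTau_one (x : En n) : ftilTau n k V 1 x = ftil n k V x := by
  simp only [ftilTau, ftil, Real.one_rpow, one_mul]

theorem ftilTau_le_jetWeight (hV : ContDiff ℝ k V) {τ : ℝ} (hτ : 0 ≤ τ) (x : En n) :
    ftilTau n k V τ x ≤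
      (∑ α ∈ midx n k 1, τ ^ ((1 : ℝ) / mdeg α)) * jetWeight k V x := by
  rw [ftilTau, Finset.sum_mul]
  refine Finset.sum_le_sum fun α hα => ?_
  obtain ⟨hα1, hαk⟩ := mem_midx.1 hα
  gcongr
  simpa using abs_pdm_rpow_le_jetWeight_rpow hV hα1 hαk zero_le_one x

theorem one_add_ftil_le_jetWeight (hV : ContDiff ℝ k V) (x : En n) :
    1 + ftil n k V x ≤ (1 + (midx n k 1).card) * (1 + jetWeight k V x) := by
  have hle := ftilTau_le_jetWeight hV zero_le_one x
  simp only [ftilTau_one, Real.one_rpow, Finset.sum_const, nsmul_eq_mul, mul_one] at hle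
  nlinarith [jetWeight_nonneg k V x, Nat.cast_nonneg (α := ℝ) (midx n k 1).card]

theorem jetTame_of_abs_pdm_le (hV : ContDiff ℝ (k + 1) V) {δ : ℝ} (hδ : δ ∈ Set.Ioo (0 : ℝ) 1)
    (h : ∀ α : Fin n → ℕ, mdeg α = k + 1 → ∃ C > (0 : ℝ), ∀ x,
      |pdm n α V x| ≤ C * (1 + ftil n k V x) ^ ((k : ℝ) + 1 - δ)) : JetTame k V := by
  choose! C hC h using h
  set N : ℝ := 1 + (midx n k 1).card
  set p : ℝ := (k : ℝ) + 1 - δ with hp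
  have hp0 : 0 ≤ p := by linarith [hδ.2, (Nat.cast_nonneg k : (0 : ℝ) ≤ k)]
  set S : ℝ := ∑ v : Fin (k + 1) → Fin n, C (wordMultiIndex v)
  have hS : 0 ≤ S := Finset.sum_nonneg fun v _ => (hC _ (mdeg_wordMultiIndex v)).le
  refine ⟨S * N ^ p, δ, hδ, fun x => ?_⟩
  have hΦ := jetWeight_nonneg k V x
  have hf : 0 ≤ ftil n k V x := ftilTau_one (V := V) x ▸ ftilTau_nonneg zero_le_one x
  calc ‖iteratedFDeriv ℝ (k + 1) V x‖
      ≤ ∑ v : Fin (k + 1) → Fin n, |pdm n (wordMultiIndex v) V x| :=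
        norm_iteratedFDeriv_le_sum_abs_pdm hV x
    _ ≤ ∑ v : Fin (k + 1) → Fin n, C (wordMultiIndex v) * (1 + ftil n k V x) ^ p :=
        Finset.sum_le_sum fun v _ => h _ (mdeg_wordMultiIndex v) x
    _ = S * (1 + ftil n k V x) ^ p := (Finset.sum_mul _ _ _).symm
    _ ≤ S * (N * (1 + jetWeight k V x)) ^ p := by
        gcongr
        exact one_add_ftil_le_jetWeight (hV.of_le (by exact_mod_cast k.le_succ)) x
    _ = S * N ^ p * (1 + jetWeight k V x) ^ p := by
        rw [Real.mul_rpow (by positivity) (by positivity), mul_assoc]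

theorem hessianPinched_of_lamPos_le (hk : 1 ≤ k) (hV : ContDiff ℝ (k + 1) V) {C₀ δ : ℝ}
    (hC₀ : 0 < C₀) (hδ : δ ∈ Set.Ioo (0 : ℝ) 1)
    (h : ∀ x, lamPos n V x ≤ C₀ * (lamNeg n V x + ‖gradient V x‖ ^ 2 +
      (∑ α ∈ midx n k 2, |pdm n α V x| ^ ((2 - δ) / mdeg α)) + 1)) : HessianPinched k V := by
  set N : ℝ := ((midx n k 2).card : ℝ)
  refine ⟨C₀ * (n + N + 1), by positivity, δ, hδ, fun x b hb hbelow v hv => ?_⟩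
  have hV2 : ContDiffAt ℝ 2 V x :=
    (hV.of_le (by exact_mod_cast Nat.succ_le_succ hk)).contDiffAt
  have hδ2 : 0 ≤ 2 - δ := by linarith [hδ.2]
  have hΦ := jetWeight_nonneg k V x
  set P := (1 + jetWeight k V x) ^ (2 - δ)
  have hP : 1 ≤ P := Real.one_le_rpow (by linarith) hδ2
  have hsum : ∑ α ∈ midx n k 2, |pdm n α V x| ^ ((2 - δ) / mdeg α) ≤ N * P := by
    refine (Finset.sum_le_card_nsmul _ _ P fun α hα => ?_).trans_eq (nsmul_eq_mul _ P)
    obtain ⟨hα2, hαk⟩ := mem_midx.1 hα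
    refine (abs_pdm_rpow_le_jetWeight_rpow (hV.of_le (by exact_mod_cast k.le_succ))
      (one_le_two.trans hα2) hαk hδ2 x).trans ?_
    exact Real.rpow_le_rpow hΦ (by linarith) hδ2
  have hgrad : ‖gradient V x‖ = ‖fderiv ℝ V x‖ := LinearIsometryEquiv.norm_map _ _
  calc fderiv ℝ (fderiv ℝ V) x v v ≤ lamPos n V x := fderiv_fderiv_le_lamPos hV2 hv
    _ ≤ C₀ * (n * b + ‖fderiv ℝ V x‖ ^ 2 + N * P + 1) := by
        refine (h x).trans ?_
        rw [hgrad]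
        gcongr
        exact lamNeg_le_mul hV2 hb hbelow
    _ ≤ C₀ * ((n + N + 1) * (b + ‖fderiv ℝ V x‖ ^ 2 + P)) := by
        gcongr
        have : 0 ≤ n * (‖fderiv ℝ V x‖ ^ 2 + P) + N * (b + ‖fderiv ℝ V x‖ ^ 2) + b := by positivity
        linarith
    _ = C₀ * (n + N + 1) * (b + ‖fderiv ℝ V x‖ ^ 2 + P) := by ring

theorem Qform_eq_integral_twistedDeriv (τ : ℝ) (V u : En n → ℝ) :
    Qform n V τ u = ∫ x, ‖twistedDeriv τ V u x‖ ^ 2 := by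
  simp only [Qform, gradient, twistedDeriv, ← map_smul, ← map_add, LinearIsometryEquiv.norm_map]

end CoordinateWeights

section MaximalEstimate

variable {n k : ℕ} {V u : En n → ℝ}

theorem integral_ftilTau_sq_le (hV : ContDiff ℝ k V) (hu : Continuous u)
    (hsupp : HasCompactSupport u) {τ : ℝ} (hτ : 0 ≤ τ) :
    ∫ x, ftilTau n k V τ x ^ 2 * u x ^ 2 ≤
      (∑ α ∈ midx n k 1, τ ^ ((1 : ℝ) / mdeg α)) ^ 2 *
        ∫ x, jetWeight k V x ^ 2 * u x ^ 2 := by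
  have hint : Integrable fun x => jetWeight k V x ^ 2 * u x ^ 2 :=
    (((continuous_jetWeight hV).pow 2).mul (hu.pow 2)).integrable_of_hasCompactSupport
      (hsupp.comp_left (zero_pow two_ne_zero)).mul_left
  rw [← integral_const_mul]
  refine integral_mono_of_nonneg (.of_forall fun x => by positivity) (hint.const_mul _)
    (.of_forall fun x => ?_)
  calc ftilTau n k V τ x ^ 2 * u x ^ 2
      ≤ ((∑ α ∈ midx n k 1, τ ^ ((1 : ℝ) / mdeg α)) * jetWeight k V x) ^ 2 * u x ^ 2 := by
        have := ftilTau_nonneg (k := k) (V := V) hτ x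
        gcongr
        exact ftilTau_le_jetWeight hV hτ x
    _ = _ := by ring

theorem witten_maximal_estimate_general (n k : ℕ) (hk : 1 ≤ k) (V : En n → ℝ)
    (hV : ContDiff ℝ (k + 1) V)
    (hpinch : ∃ C₀ > (0 : ℝ), ∃ δ₁ ∈ Set.Ioo (0 : ℝ) 1, ∀ x,
      lamPos n V x ≤ C₀ * (lamNeg n V x + ‖gradient V x‖ ^ 2 +
        (∑ α ∈ midx n k 2, |pdm n α V x| ^ ((2 - δ₁) / mdeg α)) + 1))
    (htame : ∃ δ₂ ∈ Set.Ioo (0 : ℝ) 1, ∀ α : Fin n → ℕ, mdeg α = k + 1 →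
      ∃ Cα > (0 : ℝ), ∀ x, |pdm n α V x| ≤ Cα * (1 + ftil n k V x) ^ ((k : ℝ) + 1 - δ₂)) :
    ∀ τ : ℝ, 0 < τ → ∃ Cτ > (0 : ℝ), ∀ u : En n → ℝ, ContDiff ℝ 1 u → HasCompactSupport u →
      (∫ x, ftilTau n k V τ x ^ 2 * u x ^ 2) ≤ Cτ * Qform n V τ u + Cτ * ∫ x, u x ^ 2 := by
  intro τ hτ
  obtain ⟨C₀, hC₀, δ₁, hδ₁, hpinch⟩ := hpinch
  obtain ⟨δ₂, hδ₂, htame⟩ := htame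
  obtain ⟨D, hD, hbound⟩ := exists_integral_jetWeight_sq_le (μ := volume) hk hV
    (jetTame_of_abs_pdm_le hV hδ₂ htame) (hessianPinched_of_lamPos_le hk hV hC₀ hδ₁ hpinch) hτ
  set S := ∑ α ∈ midx n k 1, τ ^ ((1 : ℝ) / mdeg α)
  refine ⟨(S ^ 2 + 1) * D, by positivity, fun u hu hsupp => ?_⟩
  calc ∫ x, ftilTau n k V τ x ^ 2 * u x ^ 2
      ≤ S ^ 2 * ∫ x, jetWeight k V x ^ 2 * u x ^ 2 :=
        integral_ftilTau_sq_le (hV.of_le (by exact_mod_cast k.le_succ)) hu.continuous hsupp hτ.le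
    _ ≤ (S ^ 2 + 1) * ∫ x, jetWeight k V x ^ 2 * u x ^ 2 := by
        gcongr
        exact le_add_of_nonneg_right zero_le_one
    _ ≤ (S ^ 2 + 1) * (D * Qform n V τ u + D * ∫ x, u x ^ 2) := by
        rw [Qform_eq_integral_twistedDeriv]
        gcongr
        exact hbound u hu hsupp
    _ = (S ^ 2 + 1) * D * Qform n V τ u + (S ^ 2 + 1) * D * ∫ x, u x ^ 2 := by ring

end MaximalEstimate

/-- maximal estimate for the Witten Laplacian, for every `τ > 0`. -/
theorem witten_maximal_estimate (n k : ℕ) (hn : 1 ≤ n) (hk : 2 ≤ k)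
    (V : En n → ℝ) (hV : ContDiff ℝ (⊤ : ℕ∞) V) (hA : AssumptionA n k V) :
    ∀ τ : ℝ, 0 < τ → ∃ Cτ > (0 : ℝ), ∀ u : En n → ℝ, TestFun n u →
      (∫ x : En n, ftilTau n k V τ x ^ 2 * u x ^ 2)
        ≤ Cτ * Qform n V τ u + Cτ * ∫ x : En n, u x ^ 2 := by
  obtain ⟨⟨C₀, hC₀, hpinch⟩, htame, -⟩ := hA
  have hmain := witten_maximal_estimate_general n k (one_le_two.trans hk) V
    (hV.of_le (by exact_mod_cast le_top)) ⟨C₀, one_pos.trans hC₀, hpinch⟩ htame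
  exact fun τ hτ => (hmain τ hτ).imp fun _ h =>
    ⟨h.1, fun u hu => h.2 u (hu.1.of_le (by exact_mod_cast le_top)) hu.2⟩

end
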